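/- Suppose G ⊂ ℝⁿ is a bounded domain satisfying a β-quasihyperbolic boundary condition, β ∈ (0,1], with dim_M(∂G) ≤ λ ∈ [n-1, n), and suppose 1 ≤ q < p < ∞ with p > q(n - λβ)/(q + β(n - λ)). Then there exists a finite constant c such that (∫_G |u - u_G|^q dx)^{1/q} ≤ c (∫_G |∇u|^p dx)^{1/p} for all u ∈ W^{1,p}(G), where u_G is the mean of u over G. -/

import Mathlib

open MeasureTheory ENNReal

/-- The quasihyperbolic distance `k_G(x, y) = inf_γ ∫_γ ds / dist(z, ∂G)`, the infimum
being over rectifiable curves in `G` from `x` to `y`, parametrized by arc length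
(encoded as `1`-Lipschitz parametrizations). -/
noncomputable def qhDist {n : ℕ} (G : Set (EuclideanSpace ℝ (Fin n)))
    (x y : EuclideanSpace ℝ (Fin n)) : ℝ :=
  sInf {v : ℝ | ∃ (L : ℝ) (γ : ℝ → EuclideanSpace ℝ (Fin n)), 0 ≤ L ∧
    LipschitzWith 1 γ ∧ γ 0 = x ∧ γ L = y ∧ (∀ t ∈ Set.Icc (0:ℝ) L, γ t ∈ G) ∧
    v = ∫ t in (0:ℝ)..L, 1 / Metric.infDist (γ t) (frontier G)}

/-- `G` satisfies a `β`-quasihyperbolic boundary condition with base point `x₀` and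
constant `c`: `k_G(x, x₀) ≤ (1/β) log(1/dist(x, ∂G)) + c` for all `x ∈ G`. -/
def QHBCWith {n : ℕ} (G : Set (EuclideanSpace ℝ (Fin n))) (β : ℝ)
    (x₀ : EuclideanSpace ℝ (Fin n)) (c : ℝ) : Prop :=
  ∀ x ∈ G, qhDist G x x₀ ≤ (1 / β) * Real.log (1 / Metric.infDist x (frontier G)) + c

/-- `G` satisfies a `β`-quasihyperbolic boundary condition. -/
def QHBC {n : ℕ} (G : Set (EuclideanSpace ℝ (Fin n))) (β : ℝ) : Prop :=
  ∃ x₀ ∈ G, ∃ c : ℝ, QHBCWith G β x₀ c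

/-- `G` supports the `(q,p)`-Poincaré inequality
`(∫_G |u - u_G|^q)^{1/q} ≤ c (∫_G |∇u|^p)^{1/p}` for Sobolev functions on `G`. -/
def SupportsPoincare {n : ℕ} (G : Set (EuclideanSpace ℝ (Fin n))) (q p : ℝ) : Prop :=
  ∃ c : ℝ, ∀ u : EuclideanSpace ℝ (Fin n) → ℝ,
    DifferentiableOn ℝ u G → IntegrableOn u G volume →
    IntegrableOn (fun x => ‖fderivWithin ℝ u G x‖ ^ p) G volume →
    (∫ x in G, |u x - (∫ y in G, u y) / (volume G).toReal| ^ q) ^ (1 / q)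
      ≤ c * (∫ x in G, ‖fderivWithin ℝ u G x‖ ^ p) ^ (1 / p)

/-- The `λ`-dimensional Minkowski precontent
`M_λ(E, r) = |⋃_{x ∈ E} B(x, r)| / r^{n-λ}`. -/
noncomputable def minkowskiPrecontent (n : ℕ) (E : Set (EuclideanSpace ℝ (Fin n)))
    (l r : ℝ) : ℝ≥0∞ :=
  volume (⋃ x ∈ E, Metric.ball x r) / ENNReal.ofReal (r ^ ((n : ℝ) - l))

/-- The upper Minkowski dimension
`dim_M(E) = sup {λ ≥ 0 : limsup_{r → 0+} M_λ(E, r) = ∞}`. -/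
noncomputable def upperMinkowskiDim (n : ℕ) (E : Set (EuclideanSpace ℝ (Fin n))) : ℝ :=
  sSup {l : ℝ | 0 ≤ l ∧
    Filter.limsup (fun r => minkowskiPrecontent n E l r) (nhdsWithin 0 (Set.Ioi 0)) = ⊤}

section PoincareAux

theorem aux_frontier_nonempty {n : ℕ} (hn : 2 ≤ n) {G : Set (EuclideanSpace ℝ (Fin n))}
    (hGb : Bornology.IsBounded G) (hne : G.Nonempty) : (frontier G).Nonempty := by
  have : Nonempty (Fin n) := ⟨⟨0, by omega⟩⟩
  rw [nonempty_frontier_iff]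
  refine ⟨hne, ?_⟩
  rintro rfl
  exact NormedSpace.unbounded_univ ℝ (EuclideanSpace ℝ (Fin n)) hGb

theorem aux_dpos {n : ℕ} (hn : 2 ≤ n) {G : Set (EuclideanSpace ℝ (Fin n))} (hGo : IsOpen G)
    (hGb : Bornology.IsBounded G) {x : EuclideanSpace ℝ (Fin n)} (hx : x ∈ G) :
    0 < Metric.infDist x (frontier G) := by
  rw [← isClosed_frontier.notMem_iff_infDist_pos (aux_frontier_nonempty hn hGb ⟨x, hx⟩)]
  rw [hGo.frontier_eq]
  exact fun h => h.2 hx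

theorem aux_ball_sub {n : ℕ} {G : Set (EuclideanSpace ℝ (Fin n))} (hGo : IsOpen G)
    {x : EuclideanSpace ℝ (Fin n)} (hx : x ∈ G) (hd : 0 < Metric.infDist x (frontier G)) :
    Metric.ball x (Metric.infDist x (frontier G)) ⊆ G := by
  refine (convex_ball x _).isPreconnected.subset_of_closure_inter_subset hGo
    ⟨x, Metric.mem_ball_self hd, hx⟩ ?_
  rintro y ⟨hy1, hy2⟩
  by_contra hy
  have hyf : y ∈ frontier G := by rw [hGo.frontier_eq]; exact ⟨hy1, hy⟩
  have := Metric.infDist_le_dist_of_mem (x := x) hyf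
  rw [Metric.mem_ball, dist_comm] at hy2
  linarith

theorem aux_dlip {n : ℕ} {G : Set (EuclideanSpace ℝ (Fin n))}
    (x y : EuclideanSpace ℝ (Fin n)) :
    Metric.infDist x (frontier G) ≤ Metric.infDist y (frontier G) + dist x y :=
  Metric.infDist_le_infDist_add_dist

theorem aux_dbdd {n : ℕ} (hn : 2 ≤ n) {G : Set (EuclideanSpace ℝ (Fin n))}
    (hGb : Bornology.IsBounded G) (hne : G.Nonempty) :
    ∃ D : ℝ, 1 ≤ D ∧ ∀ x ∈ G, Metric.infDist x (frontier G) ≤ D := by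
  obtain ⟨y, hy⟩ := aux_frontier_nonempty hn hGb hne
  obtain ⟨R, hR⟩ := hGb.subset_closedBall y
  refine ⟨max 1 R, le_max_left _ _, fun x hx => ?_⟩
  exact (Metric.infDist_le_dist_of_mem hy).trans ((hR hx).trans (le_max_right _ _))

theorem aux_seg {n : ℕ} {u : EuclideanSpace ℝ (Fin n) → ℝ} (x y : EuclideanSpace ℝ (Fin n))
    (hu : ∀ t ∈ Set.Icc (0:ℝ) 1, DifferentiableAt ℝ u (x + t • (y - x))) :
    ‖u y - u x‖ₑ ≤ ‖y - x‖ₑ * ∫⁻ t in Set.Ioc (0:ℝ) 1, ‖fderiv ℝ u (x + t • (y - x))‖ₑ := by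
  by_cases hxy : y - x = 0
  · rw [sub_eq_zero] at hxy; simp [hxy]
  by_cases htop : ∫⁻ t in Set.Ioc (0:ℝ) 1, ‖fderiv ℝ u (x + t • (y - x))‖ₑ = ⊤
  · rw [htop, ENNReal.mul_top (by simpa using hxy)]; exact le_top
  have hmeas : Measurable (fun t : ℝ => fderiv ℝ u (x + t • (y - x))) :=
    (measurable_fderiv ℝ u).comp (by fun_prop)
  have hder : ∀ t ∈ Set.uIcc (0:ℝ) 1, HasDerivAt (fun t : ℝ => u (x + t • (y - x)))
      (fderiv ℝ u (x + t • (y - x)) (y - x)) t := by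
    intro t ht
    rw [Set.uIcc_of_le zero_le_one] at ht
    have h1 : HasDerivAt (fun t : ℝ => x + t • (y - x)) (y - x) t := by
      simpa using ((hasDerivAt_id t).smul_const (y - x)).const_add x
    exact (hu t ht).hasFDerivAt.comp_hasDerivAt t h1
  have hint0 : IntegrableOn (fun t : ℝ => fderiv ℝ u (x + t • (y - x))) (Set.Ioc 0 1) volume := by
    refine ⟨hmeas.aestronglyMeasurable, ?_⟩
    rw [hasFiniteIntegral_iff_enorm]
    exact lt_top_iff_ne_top.2 htop
  have hint : IntervalIntegrable (fun t : ℝ => fderiv ℝ u (x + t • (y - x)) (y - x)) volume 0 1 := by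
    rw [intervalIntegrable_iff_integrableOn_Ioc_of_le zero_le_one]
    exact hint0.apply_continuousLinearMap (y - x)
  have h := intervalIntegral.integral_eq_sub_of_hasDerivAt hder hint
  simp only [one_smul, zero_smul, add_zero, add_sub_cancel] at h
  rw [← h, intervalIntegral.integral_of_le zero_le_one]
  refine (enorm_integral_le_lintegral_enorm _).trans ?_
  rw [← lintegral_const_mul' _ _ (by simp)]
  refine lintegral_mono fun t => ?_
  rw [mul_comm]
  exact ContinuousLinearMap.le_opENorm _ _

theorem aux_jensen {α : Type*} [MeasurableSpace α] (μ : Measure α) [IsProbabilityMeasure μ]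
    {q : ℝ} (hq : 1 ≤ q) {f : α → ℝ≥0∞} (hf : AEMeasurable f μ) :
    (∫⁻ a, f a ∂μ) ^ q ≤ ∫⁻ a, f a ^ q ∂μ := by
  rcases hq.eq_or_lt with rfl | hq1
  · simp
  have hc : q.HolderConjugate (Real.conjExponent q) := Real.HolderConjugate.conjExponent hq1
  have := ENNReal.lintegral_mul_le_Lp_mul_Lq μ hc hf (aemeasurable_const (b := (1:ℝ≥0∞)))
  simp only [Pi.mul_apply, mul_one, ENNReal.one_rpow, lintegral_const, measure_univ] at this
  calc (∫⁻ a, f a ∂μ) ^ q ≤ ((∫⁻ a, f a ^ q ∂μ) ^ (1/q)) ^ q := by gcongr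
    _ = _ := by rw [← ENNReal.rpow_mul, one_div_mul_cancel (by linarith), ENNReal.rpow_one]

theorem aux_scale {n : ℕ} {B : Set (EuclideanSpace ℝ (Fin n))} (hB : MeasurableSet B)
    (hc : Convex ℝ B) {h : EuclideanSpace ℝ (Fin n) → ℝ≥0∞} (hh : Measurable h)
    {x : EuclideanSpace ℝ (Fin n)} (hx : x ∈ B) {t : ℝ} (ht : 1/2 ≤ t) (ht1 : t ≤ 1) :
    ∫⁻ y in B, h (x + t • (y - x)) ≤ 2 ^ n * ∫⁻ y in B, h y := by
  have ht0 : 0 < t := by linarith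
  have hmap := Measure.map_addHaar_smul (volume : Measure (EuclideanSpace ℝ (Fin n))) ht0.ne'
  have hk : Measurable (fun z => B.indicator h (x - t • x + z)) :=
    (hh.indicator hB).comp (by fun_prop)
  calc ∫⁻ y in B, h (x + t • (y - x))
      ≤ ∫⁻ y in B, B.indicator h (x - t • x + t • y) := by
        refine setLIntegral_mono' hB fun y hy => ?_
        have e : x - t • x + t • y = x + t • (y - x) := by rw [smul_sub]; abel
        rw [e, Set.indicator_of_mem]
        have := hc.add_smul_sub_mem hx hy ⟨ht0.le, ht1⟩
        exact this
    _ ≤ ∫⁻ y, B.indicator h (x - t • x + t • y) := setLIntegral_le_lintegral _ _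
    _ = ∫⁻ z, B.indicator h (x - t • x + z) ∂(Measure.map (t • ·) volume) := by
        rw [lintegral_map hk (by fun_prop)]
    _ = ENNReal.ofReal (abs (t ^ n)⁻¹) * ∫⁻ z, B.indicator h z := by
        rw [hmap, lintegral_smul_measure, lintegral_add_left_eq_self]
        simp
    _ ≤ 2 ^ n * ∫⁻ y in B, h y := by
        rw [lintegral_indicator hB]
        gcongr
        rw [abs_of_pos (by positivity), ← inv_pow]
        refine ENNReal.ofReal_le_of_le_toReal ?_
        simp only [toReal_pow, toReal_ofNat]
        gcongr
        rw [inv_le_comm₀ ht0 (by norm_num)]; linarith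

end PoincareAux

section PoincareAux

theorem aux_poin {n : ℕ} {B : Set (EuclideanSpace ℝ (Fin n))} (hB : MeasurableSet B)
    (hc : Convex ℝ B) {u : EuclideanSpace ℝ (Fin n) → ℝ} (hu : ∀ x ∈ B, DifferentiableAt ℝ u x)
    {q : ℝ} (hq : 1 ≤ q) {R : ℝ≥0∞} (hR : ∀ x ∈ B, ∀ y ∈ B, ‖y - x‖ₑ ≤ R) (hRt : R ≠ ⊤) :
    ∫⁻ x in B, ∫⁻ y in B, ‖u y - u x‖ₑ ^ q ≤
      R ^ q * (2 ^ n * (volume B * ∫⁻ y in B, ‖fderiv ℝ u y‖ₑ ^ q)) := by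
  have hq0 : 0 ≤ q := by linarith
  set h : EuclideanSpace ℝ (Fin n) → ℝ≥0∞ := fun y => ‖fderiv ℝ u y‖ₑ ^ q with hh
  have hhm : Measurable h := ((measurable_fderiv ℝ u).enorm).pow_const q
  have hpt : ∀ x ∈ B, ∀ y ∈ B, ‖u y - u x‖ₑ ^ q ≤
      R ^ q * ∫⁻ t in Set.Ioc (0:ℝ) 1, h (x + t • (y - x)) := by
    intro x hx y hy
    have h1 := aux_seg (u := u) x y
      (fun t ht => hu _ (hc.add_smul_sub_mem hx hy ht))
    have : IsProbabilityMeasure ((volume : Measure ℝ).restrict (Set.Ioc (0:ℝ) 1)) :=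
      ⟨by simp⟩
    have h2 := aux_jensen ((volume : Measure ℝ).restrict (Set.Ioc (0:ℝ) 1)) hq
      (f := fun t => ‖fderiv ℝ u (x + t • (y - x))‖ₑ)
      (((measurable_fderiv ℝ u).comp (by fun_prop)).enorm.aemeasurable)
    calc ‖u y - u x‖ₑ ^ q ≤ (R * ∫⁻ t in Set.Ioc (0:ℝ) 1, ‖fderiv ℝ u (x + t • (y - x))‖ₑ) ^ q := by
          refine ENNReal.rpow_le_rpow (h1.trans ?_) hq0
          gcongr; exact hR x hx y hy
      _ = R ^ q * (∫⁻ t in Set.Ioc (0:ℝ) 1, ‖fderiv ℝ u (x + t • (y - x))‖ₑ) ^ q :=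
          ENNReal.mul_rpow_of_nonneg _ _ hq0
      _ ≤ _ := by gcongr
  have hJ : ∀ t ∈ Set.Ioc (0:ℝ) 1, ∫⁻ x in B, ∫⁻ y in B, h (x + t • (y - x)) ≤
      2 ^ n * (volume B * ∫⁻ y in B, h y) := by
    intro t ht
    have key : ∀ s : ℝ, 1/2 ≤ s → s ≤ 1 → ∫⁻ x in B, ∫⁻ y in B, h (x + s • (y - x)) ≤
      2 ^ n * (volume B * ∫⁻ y in B, h y) := by
      intro s hs hs1
      calc ∫⁻ x in B, ∫⁻ y in B, h (x + s • (y - x))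
          ≤ ∫⁻ x in B, 2 ^ n * ∫⁻ y in B, h y :=
            setLIntegral_mono' hB fun x hx => aux_scale hB hc hhm hx hs hs1
        _ = _ := by rw [lintegral_const, Measure.restrict_apply_univ]; ring
    rcases le_total (1/2) t with h1 | h1
    · exact key t h1 ht.2
    · rw [lintegral_lintegral_swap]
      · convert key (1 - t) (by linarith) (by linarith [ht.1]) using 6 with y x
        · simp only [smul_sub, sub_smul, one_smul]; abel
      · apply Measurable.aemeasurable
        apply hhm.comp
        fun_prop
  calc ∫⁻ x in B, ∫⁻ y in B, ‖u y - u x‖ₑ ^ q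
      ≤ ∫⁻ x in B, ∫⁻ y in B, R ^ q * ∫⁻ t in Set.Ioc (0:ℝ) 1, h (x + t • (y - x)) :=
        setLIntegral_mono' hB fun x hx => setLIntegral_mono' hB fun y hy => hpt x hx y hy
    _ = R ^ q * ∫⁻ x in B, ∫⁻ y in B, ∫⁻ t in Set.Ioc (0:ℝ) 1, h (x + t • (y - x)) := by
        have : R ^ q ≠ ⊤ := ENNReal.rpow_ne_top_of_nonneg hq0 hRt
        rw [← lintegral_const_mul' _ _ this]
        congr 1; ext x
        rw [← lintegral_const_mul' _ _ this]
    _ = R ^ q * ∫⁻ t in Set.Ioc (0:ℝ) 1, ∫⁻ x in B, ∫⁻ y in B, h (x + t • (y - x)) := by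
        congr 1
        rw [lintegral_lintegral_swap (μ := volume.restrict (Set.Ioc (0:ℝ) 1))]
        · congr 1; ext x
          rw [lintegral_lintegral_swap]
          apply Measurable.aemeasurable
          apply hhm.comp
          fun_prop
        · apply Measurable.aemeasurable
          apply Measurable.lintegral_prod_right' (f := fun z : (ℝ × EuclideanSpace ℝ (Fin n)) ×
            EuclideanSpace ℝ (Fin n) => h (z.1.2 + z.1.1 • (z.2 - z.1.2)))
          apply hhm.comp
          fun_prop
    _ ≤ R ^ q * ∫⁻ t in Set.Ioc (0:ℝ) 1, 2 ^ n * (volume B * ∫⁻ y in B, h y) := by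
        gcongr 1
        exact setLIntegral_mono' measurableSet_Ioc hJ
    _ = _ := by simp

theorem aux_m {n : ℕ} {B : Set (EuclideanSpace ℝ (Fin n))} (hB : MeasurableSet B)
    (hc : Convex ℝ B) {u : EuclideanSpace ℝ (Fin n) → ℝ} (hu : ∀ x ∈ B, DifferentiableAt ℝ u x)
    {q : ℝ} (hq : 1 ≤ q) {R : ℝ≥0∞} (hR : ∀ x ∈ B, ∀ y ∈ B, ‖y - x‖ₑ ≤ R) (hRt : R ≠ ⊤)
    (hv0 : volume B ≠ 0) (hvt : volume B ≠ ⊤) :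
    ∃ m : ℝ, ∫⁻ y in B, ‖u y - m‖ₑ ^ q ≤ R ^ q * (2 ^ n * ∫⁻ y in B, ‖fderiv ℝ u y‖ₑ ^ q) := by
  have hum : AEMeasurable u (volume.restrict B) := by
    have : ContinuousOn u B := fun x hx => (hu x hx).continuousAt.continuousWithinAt
    exact this.aemeasurable hB
  have hm : AEMeasurable (fun x => ∫⁻ y in B, ‖u y - u x‖ₑ ^ q) (volume.restrict B) := by
    apply AEMeasurable.lintegral_prod_right' (f := fun z : EuclideanSpace ℝ (Fin n) ×
            EuclideanSpace ℝ (Fin n) => ‖u z.2 - u z.1‖ₑ ^ q)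
    exact ((hum.comp_snd.sub hum.comp_fst).enorm).pow_const q
  obtain ⟨x, hx, h⟩ := exists_le_setLAverage hv0 hvt hm
  refine ⟨u x, h.trans ?_⟩
  rw [setLAverage_eq]
  refine ENNReal.div_le_of_le_mul ?_
  refine (aux_poin hB hc hu hq hR hRt).trans (le_of_eq ?_)
  ring

end PoincareAux

section PoincareAux

theorem aux_step {n : ℕ} (hn : 2 ≤ n) {G : Set (EuclideanSpace ℝ (Fin n))} (hGo : IsOpen G)
    (hGb : Bornology.IsBounded G) {q : ℝ} (hq : 1 ≤ q) :
    ∃ C : ℝ≥0∞, C ≠ ⊤ ∧ ∀ u : EuclideanSpace ℝ (Fin n) → ℝ, DifferentiableOn ℝ u G →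
      ∃ m : EuclideanSpace ℝ (Fin n) → ℝ,
      (∀ z ∈ G, ∫⁻ y in Metric.ball z (Metric.infDist z (frontier G) / 2), ‖u y - m z‖ₑ ^ q ≤
        C * (ENNReal.ofReal (Metric.infDist z (frontier G)) ^ q *
          ∫⁻ y in Metric.ball z (Metric.infDist z (frontier G) / 2), ‖fderiv ℝ u y‖ₑ ^ q)) ∧
      (∀ z ∈ G, ∀ z' ∈ G, dist z z' ≤ Metric.infDist z (frontier G) / 8 →
        ‖m z - m z'‖ₑ ^ q ≤ C * (
          ENNReal.ofReal (Metric.infDist z (frontier G)) ^ (q - n) *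
          (∫⁻ y in Metric.ball z (Metric.infDist z (frontier G) / 2), ‖fderiv ℝ u y‖ₑ ^ q) +
          ENNReal.ofReal (Metric.infDist z' (frontier G)) ^ (q - n) *
          (∫⁻ y in Metric.ball z' (Metric.infDist z' (frontier G) / 2), ‖fderiv ℝ u y‖ₑ ^ q))) := by
  have : Nonempty (Fin n) := ⟨⟨0, by omega⟩⟩
  have hq0 : 0 ≤ q := by linarith
  set v : ℝ≥0∞ := volume (Metric.ball (0 : EuclideanSpace ℝ (Fin n)) 1) with hv
  have hv0 : v ≠ 0 := (Metric.measure_ball_pos _ _ one_pos).ne'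
  have hvt : v ≠ ⊤ := measure_ball_lt_top.ne
  set K : ℝ≥0∞ := 2 ^ (q - 1) * 2 ^ n * v⁻¹ * 4 ^ n * 2 ^ n with hK
  have h2q : (2:ℝ≥0∞) ^ (q-1) ≠ ⊤ := ENNReal.rpow_ne_top_of_nonneg (by linarith) (by simp)
  have hKt : K ≠ ⊤ := by
    rw [hK]
    have : v⁻¹ ≠ ⊤ := ENNReal.inv_ne_top.2 hv0
    finiteness
  refine ⟨2 ^ n + K, by finiteness, fun u hu => ?_⟩
  have hda : ∀ z ∈ G, ∀ y ∈ Metric.ball z (Metric.infDist z (frontier G) / 2),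
      DifferentiableAt ℝ u y := by
    intro z hz y hy
    have hd := aux_dpos hn hGo hGb hz
    have : y ∈ G := aux_ball_sub hGo hz hd (Metric.ball_subset_ball (by linarith) hy)
    exact hu.differentiableAt (hGo.mem_nhds this)
  have hex : ∀ z, ∃ m : ℝ, z ∈ G →
      ∫⁻ y in Metric.ball z (Metric.infDist z (frontier G) / 2), ‖u y - m‖ₑ ^ q ≤
        2 ^ n * (ENNReal.ofReal (Metric.infDist z (frontier G)) ^ q *
          ∫⁻ y in Metric.ball z (Metric.infDist z (frontier G) / 2), ‖fderiv ℝ u y‖ₑ ^ q) := by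
    intro z
    by_cases hz : z ∈ G
    · have hd := aux_dpos hn hGo hGb hz
      obtain ⟨m, hm⟩ := aux_m (B := Metric.ball z (Metric.infDist z (frontier G) / 2))
        Metric.isOpen_ball.measurableSet (convex_ball _ _) (hda z hz) hq
        (R := ENNReal.ofReal (Metric.infDist z (frontier G))) (by
          intro x hx y hy
          rw [← ofReal_norm, ← dist_eq_norm]
          refine ENNReal.ofReal_le_ofReal ?_
          have := dist_triangle_right y x z
          rw [Metric.mem_ball] at hx hy
          linarith) (by simp) (Metric.measure_ball_pos _ _ (by linarith)).ne'
          measure_ball_lt_top.ne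
      refine ⟨m, fun _ => hm.trans (le_of_eq ?_)⟩
      ring
    · exact ⟨0, fun h => absurd h hz⟩
  choose m hm using hex
  refine ⟨m, fun z hz => (hm z hz).trans (by gcongr; exact le_self_add), ?_⟩
  intro z hz z' hz' hzz
  have hd := aux_dpos hn hGo hGb hz
  have hd' := aux_dpos hn hGo hGb hz'
  have hA := hm z hz
  have hA' := hm z' hz'
  have hl1 := aux_dlip (G := G) z z'
  have hl2 := aux_dlip (G := G) z' z
  rw [dist_comm z' z] at hl2
  have hda1 := hda z hz
  set d := Metric.infDist z (frontier G) with hdd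
  set d' := Metric.infDist z' (frontier G) with hdd'
  set F := ∫⁻ y in Metric.ball z (d / 2), ‖fderiv ℝ u y‖ₑ ^ q with hF
  set F' := ∫⁻ y in Metric.ball z' (d' / 2), ‖fderiv ℝ u y‖ₑ ^ q with hF'
  have hvol : volume (Metric.ball z (d/4)) = ENNReal.ofReal d ^ n * (4 ^ n)⁻¹ * v := by
    rw [Measure.addHaar_ball_of_pos _ _ (by linarith), hv, finrank_euclideanSpace_fin, div_pow,
      ENNReal.ofReal_div_of_pos (by positivity), ENNReal.ofReal_pow hd.le,
      ENNReal.ofReal_pow (by norm_num)]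
    simp [div_eq_mul_inv]
  have hs1 : Metric.ball z (d/4) ⊆ Metric.ball z (d/2) := Metric.ball_subset_ball (by linarith)
  have hs2 : Metric.ball z (d/4) ⊆ Metric.ball z' (d'/2) := by
    apply Metric.ball_subset_ball'
    linarith
  have hum : AEMeasurable u (volume.restrict (Metric.ball z (d/4))) := by
    have : ContinuousOn u (Metric.ball z (d/4)) :=
      fun x hx => (hda1 x (hs1 hx)).continuousAt.continuousWithinAt
    exact this.aemeasurable Metric.isOpen_ball.measurableSet
  have h1 : ‖m z - m z'‖ₑ ^ q * volume (Metric.ball z (d/4)) ≤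
      2 ^ (q-1) * (2 ^ n * (ENNReal.ofReal d ^ q * F) + 2 ^ n * (ENNReal.ofReal d' ^ q * F')) := by
    calc ‖m z - m z'‖ₑ ^ q * volume (Metric.ball z (d/4))
        = ∫⁻ y in Metric.ball z (d/4), ‖m z - m z'‖ₑ ^ q := by
          rw [lintegral_const, Measure.restrict_apply_univ]
      _ ≤ ∫⁻ y in Metric.ball z (d/4), 2 ^ (q-1) * (‖u y - m z‖ₑ ^ q + ‖u y - m z'‖ₑ ^ q) := by
          refine lintegral_mono fun y => ?_
          refine le_trans ?_ (ENNReal.rpow_add_le_mul_rpow_add_rpow _ _ hq)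
          refine ENNReal.rpow_le_rpow ?_ hq0
          have : m z - m z' = (u y - m z') - (u y - m z) := by ring
          rw [this, add_comm]
          exact enorm_sub_le
      _ = 2 ^ (q-1) * ((∫⁻ y in Metric.ball z (d/4), ‖u y - m z‖ₑ ^ q) +
            ∫⁻ y in Metric.ball z (d/4), ‖u y - m z'‖ₑ ^ q) := by
          rw [lintegral_const_mul' _ _ h2q, lintegral_add_left']
          exact ((hum.sub_const _).enorm).pow_const q
      _ ≤ _ := by
          gcongr 2
          · exact (lintegral_mono_set hs1).trans hA
          · exact (lintegral_mono_set hs2).trans hA'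
  have hδ0 : ENNReal.ofReal d ≠ 0 := by simpa using hd
  have hδ0' : ENNReal.ofReal d' ≠ 0 := by simpa using hd'
  have hpow : ∀ s : ℝ, 0 < s → ENNReal.ofReal s ^ (q - n) =
      ENNReal.ofReal s ^ q * (ENNReal.ofReal s ^ n)⁻¹ := by
    intro s hs
    rw [ENNReal.rpow_sub _ _ (by simpa using hs) (by simp), ENNReal.rpow_natCast, div_eq_mul_inv]
  rw [hpow d hd, hpow d' hd']
  have hcmp : (ENNReal.ofReal d ^ n)⁻¹ ≤ 2 ^ n * (ENNReal.ofReal d' ^ n)⁻¹ := by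
    rw [ENNReal.inv_le_iff_inv_le, ENNReal.mul_inv (by simp) (by simp), inv_inv,
      ENNReal.inv_pow, ← mul_pow]
    gcongr
    rw [← ENNReal.ofReal_ofNat 2, ← ENNReal.ofReal_inv_of_pos (by norm_num),
      ← ENNReal.ofReal_mul (by norm_num)]
    apply ENNReal.ofReal_le_ofReal
    linarith
  have h3 : ‖m z - m z'‖ₑ ^ q ≤ 2 ^ (q-1) * (2 ^ n * (ENNReal.ofReal d ^ q * F) +
      2 ^ n * (ENNReal.ofReal d' ^ q * F')) / volume (Metric.ball z (d/4)) := by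
    rw [ENNReal.le_div_iff_mul_le]
    · exact h1
    · left; exact (Metric.measure_ball_pos _ _ (by linarith)).ne'
    · left; exact measure_ball_lt_top.ne
  refine h3.trans ?_
  have hvi : (volume (Metric.ball z (d/4)))⁻¹ = v⁻¹ * 4 ^ n * (ENNReal.ofReal d ^ n)⁻¹ := by
    rw [hvol, ENNReal.mul_inv (Or.inr hvt) (Or.inr hv0), ENNReal.mul_inv (by simp) (by simp),
      inv_inv]
    ring
  rw [div_eq_mul_inv, hvi]
  calc _ = 2 ^ (q - 1) * 2 ^ n * v⁻¹ * 4 ^ n * (ENNReal.ofReal d ^ q * (ENNReal.ofReal d ^ n)⁻¹ * F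
        + ENNReal.ofReal d' ^ q * (ENNReal.ofReal d ^ n)⁻¹ * F') := by ring
    _ ≤ 2 ^ (q - 1) * 2 ^ n * v⁻¹ * 4 ^ n * (2 ^ n * (ENNReal.ofReal d ^ q * (ENNReal.ofReal d ^ n)⁻¹ * F)
        + ENNReal.ofReal d' ^ q * (2 ^ n * (ENNReal.ofReal d' ^ n)⁻¹) * F') := by
        refine mul_le_mul_right (add_le_add ?_ ?_) _
        · exact le_mul_of_one_le_left zero_le (one_le_pow₀ one_le_two)
        · gcongr
    _ = K * (ENNReal.ofReal d ^ q * (ENNReal.ofReal d ^ n)⁻¹ * F +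
        ENNReal.ofReal d' ^ q * (ENNReal.ofReal d' ^ n)⁻¹ * F') := by rw [hK]; ring
    _ ≤ _ := by gcongr; exact le_add_self

theorem aux_chain {E : Type*} {m : E → ℝ} {a : E → ℝ≥0∞} {C : ℝ≥0∞} {q : ℝ} (hq : 1 ≤ q)
    {M : ℕ} {z : ℕ → E}
    (h : ∀ k < M, ‖m (z k) - m (z (k+1))‖ₑ ^ q ≤ C * (a (z k) + a (z (k+1)))) :
    ‖m (z 0) - m (z M)‖ₑ ^ q ≤
      2 * C * ((M + 1 : ℕ) : ℝ≥0∞) ^ (q - 1) * ∑ k ∈ Finset.range (M + 1), a (z k) := by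
  have h1 : ‖m (z 0) - m (z M)‖ₑ ≤ ∑ k ∈ Finset.range M, ‖m (z k) - m (z (k+1))‖ₑ := by
    rw [← Finset.sum_range_sub' (fun k => m (z k)) M]
    exact enorm_sum_le _ _
  calc ‖m (z 0) - m (z M)‖ₑ ^ q ≤ (∑ k ∈ Finset.range M, ‖m (z k) - m (z (k+1))‖ₑ) ^ q := by
        gcongr
    _ ≤ (M : ℝ≥0∞) ^ (q - 1) * ∑ k ∈ Finset.range M, ‖m (z k) - m (z (k+1))‖ₑ ^ q := by
        simpa using ENNReal.rpow_sum_le_const_mul_sum_rpow (Finset.range M)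
          (fun k => ‖m (z k) - m (z (k+1))‖ₑ) hq
    _ ≤ ((M + 1 : ℕ) : ℝ≥0∞) ^ (q - 1) * ∑ k ∈ Finset.range M, C * (a (z k) + a (z (k+1))) := by
        gcongr with k hk
        · linarith
        · exact h k (Finset.mem_range.1 hk)
    _ = ((M + 1 : ℕ) : ℝ≥0∞) ^ (q - 1) * (C * (∑ k ∈ Finset.range M, a (z k) +
          ∑ k ∈ Finset.range M, a (z (k+1)))) := by
        rw [← Finset.mul_sum, Finset.sum_add_distrib]
    _ ≤ ((M + 1 : ℕ) : ℝ≥0∞) ^ (q - 1) * (C * (∑ k ∈ Finset.range (M+1), a (z k) +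
          ∑ k ∈ Finset.range (M+1), a (z k))) := by
        gcongr
        · omega
        · rw [Finset.sum_range_succ' _ M]; exact le_self_add
    _ = _ := by ring

end PoincareAux

section PoincareAux

/-- `v` is the quasihyperbolic length of a curve in `G` from `x` to `y`. -/
def AuxCv {n : ℕ} (G : Set (EuclideanSpace ℝ (Fin n)))
    (x y : EuclideanSpace ℝ (Fin n)) (v : ℝ) : Prop :=
  ∃ (L : ℝ) (γ : ℝ → EuclideanSpace ℝ (Fin n)), 0 ≤ L ∧
    LipschitzWith 1 γ ∧ γ 0 = x ∧ γ L = y ∧ (∀ t, γ t ∈ G) ∧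
    v = ∫ t in (0:ℝ)..L, 1 / Metric.infDist (γ t) (frontier G)

theorem aux_cv_iff {n : ℕ} {G : Set (EuclideanSpace ℝ (Fin n))}
    {x y : EuclideanSpace ℝ (Fin n)} {v : ℝ} : AuxCv G x y v ↔
    ∃ (L : ℝ) (γ : ℝ → EuclideanSpace ℝ (Fin n)), 0 ≤ L ∧
    LipschitzWith 1 γ ∧ γ 0 = x ∧ γ L = y ∧ (∀ t ∈ Set.Icc (0:ℝ) L, γ t ∈ G) ∧
    v = ∫ t in (0:ℝ)..L, 1 / Metric.infDist (γ t) (frontier G) := by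
  constructor
  · rintro ⟨L, γ, h0, h1, h2, h3, h4, h5⟩
    exact ⟨L, γ, h0, h1, h2, h3, fun t _ => h4 t, h5⟩
  · rintro ⟨L, γ, h0, h1, h2, h3, h4, h5⟩
    refine ⟨L, fun t => γ (max 0 (min t L)), h0, ?_, ?_, ?_, ?_, ?_⟩
    · have hc : LipschitzWith 1 (fun t : ℝ => max 0 (min t L)) :=
        (LipschitzWith.id.min_const L).const_max 0
      have := h1.comp hc
      rw [mul_one] at this
      exact this
    · simp [h0, h2]
    · simp [h0, h3]
    · intro t
      exact h4 _ ⟨le_max_left _ _, max_le h0 (min_le_right _ _)⟩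
    · rw [h5]
      apply intervalIntegral.integral_congr
      intro t ht
      rw [Set.uIcc_of_le h0] at ht
      simp [ht.1, ht.2]

theorem aux_rho_cont {n : ℕ} (hn : 2 ≤ n) {G : Set (EuclideanSpace ℝ (Fin n))} (hGo : IsOpen G)
    (hGb : Bornology.IsBounded G) {γ : ℝ → EuclideanSpace ℝ (Fin n)} (hγ : LipschitzWith 1 γ)
    (hG : ∀ t, γ t ∈ G) : Continuous (fun t => 1 / Metric.infDist (γ t) (frontier G)) := by
  refine continuous_const.div ((Metric.continuous_infDist_pt _).comp hγ.continuous) ?_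
  intro t
  exact (aux_dpos hn hGo hGb (hG t)).ne'

theorem aux_cv_nonneg {n : ℕ} {G : Set (EuclideanSpace ℝ (Fin n))}
    {x y : EuclideanSpace ℝ (Fin n)} {v : ℝ} (h : AuxCv G x y v) : 0 ≤ v := by
  obtain ⟨L, γ, h0, h1, h2, h3, h4, h5⟩ := h
  rw [h5]
  refine intervalIntegral.integral_nonneg h0 fun t _ => ?_
  exact div_nonneg zero_le_one Metric.infDist_nonneg

theorem aux_cv_glue {n : ℕ} (hn : 2 ≤ n) {G : Set (EuclideanSpace ℝ (Fin n))} (hGo : IsOpen G)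
    (hGb : Bornology.IsBounded G) {x w y : EuclideanSpace ℝ (Fin n)} {v₁ v₂ : ℝ}
    (h : AuxCv G x w v₁) (h' : AuxCv G w y v₂) : AuxCv G x y (v₁ + v₂) := by
  obtain ⟨L, γ, h0, h1, h2, h3, h4, h5⟩ := h
  obtain ⟨L', γ', h0', h1', h2', h3', h4', h5'⟩ := h'
  set g : ℝ → EuclideanSpace ℝ (Fin n) := fun t => if t ≤ L then γ t else γ' (t - L) with hg
  have hgl : LipschitzWith 1 g := by
    apply LipschitzWith.of_dist_le_mul
    have key : ∀ s t, s ≤ t → dist (g s) (g t) ≤ t - s := by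
      intro s t hst
      simp only [hg]
      have l1 : ∀ a b, a ≤ b → dist (γ a) (γ b) ≤ b - a := fun a b hab => by
        have := h1.dist_le_mul a b
        rw [Real.dist_eq, abs_sub_comm, abs_of_nonneg (by linarith)] at this
        simpa using this
      have l2 : ∀ a b, a ≤ b → dist (γ' a) (γ' b) ≤ b - a := fun a b hab => by
        have := h1'.dist_le_mul a b
        rw [Real.dist_eq, abs_sub_comm, abs_of_nonneg (by linarith)] at this
        simpa using this
      by_cases hs : s ≤ L
      · by_cases ht : t ≤ L
        · simpa [hs, ht] using l1 s t hst
        · simp only [hs, ht, if_true, if_false]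
          push Not at ht
          have a1 := l1 s L hs
          have a2 := l2 0 (t - L) (by linarith)
          rw [h2', ← h3] at a2
          have := dist_triangle (γ s) (γ L) (γ' (t - L))
          linarith
      · have ht : ¬ t ≤ L := by push Not at hs ⊢; linarith
        simp only [hs, ht, if_false]
        have := l2 (s - L) (t - L) (by linarith)
        linarith
    intro s t
    rw [Real.dist_eq]
    simp only [NNReal.coe_one, one_mul]
    rcases le_total s t with hst | hst
    · rw [abs_sub_comm, abs_of_nonneg (by linarith)]; exact key s t hst
    · rw [abs_of_nonneg (by linarith), dist_comm]; exact key t s hst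
  have hgG : ∀ t, g t ∈ G := by
    intro t; simp only [hg]; split_ifs
    · exact h4 t
    · exact h4' _
  have hc := aux_rho_cont hn hGo hGb hgl hgG
  refine ⟨L + L', g, by linarith, hgl, ?_, ?_, hgG, ?_⟩
  · simp [hg, h0, h2]
  · rcases h0'.eq_or_lt with h | h
    · simp [hg, ← h, h3]; rw [← h2', ← h3', ← h]
    · have : ¬ (L + L' ≤ L) := by linarith
      simp only [hg, this, if_false]; simpa using h3'
  · rw [← intervalIntegral.integral_add_adjacent_intervals (hc.intervalIntegrable 0 L)
      (hc.intervalIntegrable L (L + L')), h5, h5']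
    congr 1
    · apply intervalIntegral.integral_congr
      intro t ht
      rw [Set.uIcc_of_le h0] at ht
      simp [hg, ht.2]
    · have e := intervalIntegral.integral_comp_sub_right (a := L) (b := L + L')
        (fun t => 1 / Metric.infDist (γ' t) (frontier G)) L
      simp only [sub_self, add_sub_cancel_left] at e
      rw [← e]
      apply intervalIntegral.integral_congr
      intro t ht
      rw [Set.uIcc_of_le (by linarith)] at ht
      by_cases htL : t ≤ L
      · have : t = L := le_antisymm htL ht.1
        subst this
        simp [hg, h2', h3]
      · simp [hg, htL]

theorem aux_cv_seg {n : ℕ} {G : Set (EuclideanSpace ℝ (Fin n))} (hGo : IsOpen G)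
    {x y w : EuclideanSpace ℝ (Fin n)} (hw : w ∈ G) (hd : 0 < Metric.infDist w (frontier G))
    (hx : x ∈ Metric.ball w (Metric.infDist w (frontier G)))
    (hy : y ∈ Metric.ball w (Metric.infDist w (frontier G))) : ∃ v, AuxCv G x y v := by
  refine ⟨_, aux_cv_iff.2 ⟨‖y - x‖, fun t => x + (t / ‖y - x‖) • (y - x), norm_nonneg _, ?_, ?_, ?_,
    ?_, rfl⟩⟩
  · apply LipschitzWith.of_dist_le_mul
    intro s t
    rw [dist_add_left, dist_eq_norm, ← sub_smul, norm_smul, ← sub_div, norm_div, norm_norm,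
      Real.dist_eq]
    simp only [NNReal.coe_one, one_mul]
    rw [Real.norm_eq_abs]
    by_cases h : ‖y - x‖ = 0
    · rw [h]; simp
    · rw [div_mul_cancel₀ _ h]
  · simp
  · by_cases h : ‖y - x‖ = 0
    · have : y - x = 0 := by simpa using h
      rw [sub_eq_zero] at this; simp [this]
    · simp [div_self h]
  · intro t ht
    apply aux_ball_sub hGo hw hd
    refine (convex_ball _ _).add_smul_sub_mem hx hy ⟨div_nonneg ht.1 (norm_nonneg _), ?_⟩
    exact div_le_one_of_le₀ ht.2 (norm_nonneg _)

theorem aux_cv_exists {n : ℕ} (hn : 2 ≤ n) {G : Set (EuclideanSpace ℝ (Fin n))} (hGo : IsOpen G)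
    (hGc : IsConnected G) (hGb : Bornology.IsBounded G) {x₀ : EuclideanSpace ℝ (Fin n)}
    (hx₀ : x₀ ∈ G) : ∀ x ∈ G, ∃ v, AuxCv G x x₀ v := by
  have hU : ∀ w, w ∈ {w ∈ G | ∃ v, AuxCv G w x₀ v} → 
      Metric.ball w (Metric.infDist w (frontier G)) ⊆ {w ∈ G | ∃ v, AuxCv G w x₀ v} := by
    rintro w ⟨hw, v, hv⟩ y hy
    have hd := aux_dpos hn hGo hGb hw
    obtain ⟨v', hv'⟩ := aux_cv_seg hGo hw hd hy (Metric.mem_ball_self hd)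
    exact ⟨aux_ball_sub hGo hw hd hy, _, aux_cv_glue hn hGo hGb hv' hv⟩
  have : G ⊆ {w ∈ G | ∃ v, AuxCv G w x₀ v} := by
    refine hGc.isPreconnected.subset_of_closure_inter_subset ?_ ?_ ?_
    · rw [Metric.isOpen_iff]
      intro w hw
      exact ⟨_, aux_dpos hn hGo hGb hw.1, hU w hw⟩
    · have hd := aux_dpos hn hGo hGb hx₀
      exact ⟨x₀, hx₀, hx₀, aux_cv_seg hGo hx₀ hd (Metric.mem_ball_self hd) (Metric.mem_ball_self hd)⟩
    · rintro w ⟨hw1, hw⟩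
      have hd := aux_dpos hn hGo hGb hw
      rw [Metric.mem_closure_iff] at hw1
      obtain ⟨y, ⟨hy, v, hv⟩, hwy⟩ := hw1 _ hd
      obtain ⟨v', hv'⟩ := aux_cv_seg hGo hw hd (Metric.mem_ball_self hd)
        (Metric.mem_ball'.2 hwy)
      exact ⟨hw, _, aux_cv_glue hn hGo hGb hv' hv⟩
  exact fun x hx => (this hx).2

theorem aux_qhDist_eq {n : ℕ} {G : Set (EuclideanSpace ℝ (Fin n))}
    (x y : EuclideanSpace ℝ (Fin n)) : qhDist G x y = sInf {v | AuxCv G x y v} := by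
  unfold qhDist
  congr 1
  ext v
  exact aux_cv_iff.symm

theorem aux_log_le {n : ℕ} (hn : 2 ≤ n) {G : Set (EuclideanSpace ℝ (Fin n))} (hGo : IsOpen G)
    (hGb : Bornology.IsBounded G) {γ : ℝ → EuclideanSpace ℝ (Fin n)} (hγ : LipschitzWith 1 γ)
    (hG : ∀ t, γ t ∈ G) (s t : ℝ) :
    |t - s| ≤ Metric.infDist (γ s) (frontier G) *
      (Real.exp |∫ τ in s..t, 1 / Metric.infDist (γ τ) (frontier G)| - 1) := by
  have hc := aux_rho_cont hn hGo hGb hγ hG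
  have hd := aux_dpos hn hGo hGb (hG s)
  set a := Metric.infDist (γ s) (frontier G) with ha
  suffices h : Real.log ((a + |t - s|) / a) ≤ |∫ τ in s..t, 1 / Metric.infDist (γ τ) (frontier G)| by
    have h1 := (Real.log_le_iff_le_exp (by positivity)).1 h
    rw [div_le_iff₀ hd] at h1
    linarith
  have hpt : ∀ τ, 1 / (a + |τ - s|) ≤ 1 / Metric.infDist (γ τ) (frontier G) := by
    intro τ
    apply one_div_le_one_div_of_le (aux_dpos hn hGo hGb (hG τ))
    have h1 := aux_dlip (G := G) (γ τ) (γ s)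
    have h2 := hγ.dist_le_mul τ s
    rw [Real.dist_eq] at h2
    simp only [NNReal.coe_one, one_mul] at h2
    linarith
  have hc2 : Continuous (fun τ => 1 / (a + |τ - s|)) := by
    refine continuous_const.div (by fun_prop) fun τ => ?_
    positivity
  rcases le_total s t with hst | hst
  · rw [abs_of_nonneg (sub_nonneg.2 hst), abs_of_nonneg
      (intervalIntegral.integral_nonneg hst fun t _ => div_nonneg zero_le_one Metric.infDist_nonneg)]
    refine le_trans (le_of_eq ?_) (intervalIntegral.integral_mono_on hst (hc2.intervalIntegrable _ _)
      (hc.intervalIntegrable _ _) fun τ _ => hpt τ)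
    have e := intervalIntegral.integral_eq_sub_of_hasDerivAt (a := s) (b := t)
      (f := fun τ => Real.log (a + (τ - s))) (f' := fun τ => 1 / (a + |τ - s|)) ?_
      (hc2.intervalIntegrable _ _)
    · rw [e, Real.log_div (by linarith) hd.ne']; simp
    · intro τ hτ
      rw [Set.uIcc_of_le hst] at hτ
      rw [abs_of_nonneg (by linarith [hτ.1])]
      exact (((hasDerivAt_id τ).sub_const s).const_add a).log (by simp only [id]; linarith [hτ.1])
  · rw [abs_sub_comm, abs_of_nonneg (sub_nonneg.2 hst), intervalIntegral.integral_symm, abs_neg,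
      abs_of_nonneg
      (intervalIntegral.integral_nonneg hst fun t _ => div_nonneg zero_le_one Metric.infDist_nonneg)]
    refine le_trans (le_of_eq ?_) (intervalIntegral.integral_mono_on hst (hc2.intervalIntegrable _ _)
      (hc.intervalIntegrable _ _) fun τ _ => hpt τ)
    have e := intervalIntegral.integral_eq_sub_of_hasDerivAt (a := t) (b := s)
      (f := fun τ => -Real.log (a + (s - τ))) (f' := fun τ => 1 / (a + |τ - s|)) ?_
      (hc2.intervalIntegrable _ _)
    · rw [e, Real.log_div (by linarith) hd.ne']; simp; ring
    · intro τ hτ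
      rw [Set.uIcc_of_le hst] at hτ
      rw [abs_sub_comm, abs_of_nonneg (by linarith [hτ.2])]
      have := ((((hasDerivAt_id τ).const_sub s).const_add a).log
        (by simp only [id]; linarith [hτ.2])).neg
      have e2 : 1 / (a + (s - τ)) = -(-1 / (a + (s - id τ))) := by
        rw [neg_div, neg_neg]; rfl
      rw [e2]
      exact this

end PoincareAux

section PoincareAux

theorem aux_curve {n : ℕ} (hn : 2 ≤ n) {G : Set (EuclideanSpace ℝ (Fin n))} (hGo : IsOpen G)
    (hGc : IsConnected G) (hGb : Bornology.IsBounded G) {β : ℝ} (hβ : 0 < β)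
    {x₀ : EuclideanSpace ℝ (Fin n)} (hx₀ : x₀ ∈ G) {c : ℝ} (hqh : QHBCWith G β x₀ c)
    {x : EuclideanSpace ℝ (Fin n)} (hx : x ∈ G) :
    ∃ (L : ℝ) (γ : ℝ → EuclideanSpace ℝ (Fin n)), 0 ≤ L ∧ LipschitzWith 1 γ ∧ γ 0 = x ∧ γ L = x₀ ∧
      (∀ t, γ t ∈ G) ∧ ∀ s ∈ Set.Icc (0:ℝ) L,
        ∫ t in s..L, 1 / Metric.infDist (γ t) (frontier G) ≤
          (1 / β) * Real.log (1 / Metric.infDist (γ s) (frontier G)) + (c + 1) := by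
  have hex := aux_cv_exists hn hGo hGc hGb hx₀
  have hbdd : ∀ w, BddBelow {v | AuxCv G w x₀ v} := fun w => ⟨0, fun v hv => aux_cv_nonneg hv⟩
  obtain ⟨v, hv, hlt⟩ := exists_lt_of_csInf_lt (hex x hx)
    (show sInf {v | AuxCv G x x₀ v} < qhDist G x x₀ + 1 by rw [aux_qhDist_eq]; linarith)
  obtain ⟨L, γ, h0, h1, h2, h3, h4, h5⟩ := hv
  refine ⟨L, γ, h0, h1, h2, h3, h4, fun s hs => ?_⟩
  have hc := aux_rho_cont hn hGo hGb h1 h4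
  have hsplit := intervalIntegral.integral_add_adjacent_intervals (hc.intervalIntegrable (μ := volume) 0 s)
      (hc.intervalIntegrable s L)
  have hcv : AuxCv G x (γ s) (∫ t in (0:ℝ)..s, 1 / Metric.infDist (γ t) (frontier G)) :=
    ⟨s, γ, hs.1, h1, h2, rfl, h4, rfl⟩
  have htri : qhDist G x x₀ - (∫ t in (0:ℝ)..s, 1 / Metric.infDist (γ t) (frontier G)) ≤
      qhDist G (γ s) x₀ := by
    rw [aux_qhDist_eq (γ s)]
    refine le_csInf (hex _ (h4 s)) fun v' hv' => ?_
    have := csInf_le (hbdd x) (aux_cv_glue hn hGo hGb hcv hv')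
    rw [← aux_qhDist_eq] at this
    linarith
  have := hqh (γ s) (h4 s)
  linarith

theorem aux_geom {n : ℕ} (hn : 2 ≤ n) {G : Set (EuclideanSpace ℝ (Fin n))} (hGo : IsOpen G)
    (hGc : IsConnected G) (hGb : Bornology.IsBounded G) {β : ℝ} (hβ : 0 < β)
    {x₀ : EuclideanSpace ℝ (Fin n)} (hx₀ : x₀ ∈ G) {c : ℝ} (hqh : QHBCWith G β x₀ c) :
    ∃ C : ℝ, 0 < C ∧ ∀ x ∈ G, ∃ (M : ℕ) (z : ℕ → EuclideanSpace ℝ (Fin n)),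
      z 0 = x ∧ z M = x₀ ∧ (∀ k, z k ∈ G) ∧
      (∀ k < M, dist (z k) (z (k+1)) ≤ Metric.infDist (z k) (frontier G) / 8) ∧
      (∀ k ≤ M, dist x (z k) ≤ C * Metric.infDist (z k) (frontier G) ^ β) ∧
      (∀ k ≤ M, Metric.infDist x (frontier G) ^ (1/β) ≤ C * Metric.infDist (z k) (frontier G)) ∧
      ((M : ℝ) + 1 ≤
        16 * ((1 / β) * Real.log (1 / Metric.infDist x (frontier G)) + (c + 1)) + 3) := by
  set δ := fun w => Metric.infDist w (frontier G) with hδ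
  have hδ0 : 0 < δ x₀ := aux_dpos hn hGo hGb hx₀
  set A := Real.exp (β * (c + 1)) with hA
  have hA0 : 0 < A := Real.exp_pos _
  refine ⟨A / β * (δ x₀)⁻¹ ^ β + Real.exp (c+1) / δ x₀, by positivity, fun x hx => ?_⟩
  obtain ⟨L, γ, h0, h1, h2, h3, h4, h5⟩ := aux_curve hn hGo hGc hGb hβ hx₀ hqh hx
  have hc := aux_rho_cont hn hGo hGb h1 h4
  have hlog := aux_log_le hn hGo hGb h1 h4
  set ρ := fun t => 1 / Metric.infDist (γ t) (frontier G) with hρ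
  have hρ0 : ∀ t, 0 ≤ ρ t := fun t => div_nonneg zero_le_one Metric.infDist_nonneg
  have hd : ∀ t, 0 < δ (γ t) := fun t => aux_dpos hn hGo hGb (h4 t)
  set φ := fun s => ∫ t in s..L, ρ t with hφ
  set K := φ 0 with hK
  have hφ0 : ∀ s ≤ L, 0 ≤ φ s := fun s hs => intervalIntegral.integral_nonneg hs fun t _ => hρ0 t
  have hadd : ∀ s t, φ s - φ t = ∫ τ in s..t, ρ τ := by
    intro s t
    have := intervalIntegral.integral_add_adjacent_intervals
      (hc.intervalIntegrable (μ := volume) s t) (hc.intervalIntegrable t L)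
    simp only [hφ]; linarith
  have hder : ∀ s, HasDerivAt φ (-(ρ s)) s := fun s =>
    intervalIntegral.integral_hasDerivAt_left (hc.intervalIntegrable _ _)
      (hc.stronglyMeasurableAtFilter _ _) hc.continuousAt
  have hφc : Continuous φ := continuous_iff_continuousAt.2 fun s => (hder s).continuousAt
  have hφanti : ∀ s t, s ≤ t → φ t ≤ φ s := fun s t hst => by
    have := hadd s t
    have := intervalIntegral.integral_nonneg (μ := volume) hst fun t _ => hρ0 t
    linarith
  -- upper bound for the distance along the curve
  have hup : ∀ s ∈ Set.Icc (0:ℝ) L, δ (γ s) ≤ A * Real.exp (-β * φ s) := by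
    intro s hs
    have := h5 s hs
    have h6 : φ s ≤ (1/β) * Real.log (1 / δ (γ s)) + (c+1) := this
    rw [one_div (δ _), Real.log_inv] at h6
    have h7 : β * φ s ≤ - Real.log (δ (γ s)) + β * (c+1) := by
      have := mul_le_mul_of_nonneg_left h6 hβ.le
      rw [mul_add, ← mul_assoc, mul_one_div_cancel hβ.ne', one_mul] at this
      exact this
    rw [hA, ← Real.exp_add, ← Real.log_le_iff_le_exp (hd s)]
    linarith
  -- length estimate
  have hlen : ∀ t ∈ Set.Icc (0:ℝ) L, t ≤ A / β * Real.exp (-β * φ t) := by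
    intro t ht
    have hmono : MonotoneOn (fun s => A / β * Real.exp (-β * φ s) - s) (Set.Icc 0 L) := by
      have hdd : ∀ s, HasDerivAt (fun s => A / β * Real.exp (-β * φ s) - s)
          (A / β * (Real.exp (-β * φ s) * (-β * -(ρ s))) - 1) s := fun s =>
        ((((hder s).const_mul (-β)).exp).const_mul (A/β)).sub (hasDerivAt_id s)
      refine monotoneOn_of_hasDerivWithinAt_nonneg (convex_Icc _ _)
        (fun s _ => (hdd s).continuousAt.continuousWithinAt)
        (fun s _ => (hdd s).hasDerivWithinAt) ?_
      intro s hs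
      have hs' := hup s (interior_subset hs)
      have e : A / β * (Real.exp (-β * φ s) * (-β * -(ρ s))) = A * Real.exp (-β * φ s) / δ (γ s) := by
        simp only [hρ, hδ]; field_simp
      rw [e, sub_nonneg, one_le_div (hd s)]
      exact hs'
    have h6 := hmono ⟨le_rfl, h0⟩ ht ht.1
    have h7 : 0 ≤ A / β * Real.exp (-β * φ 0) := by positivity
    simp only at h6
    linarith
  -- lower bound for φ
  have hlow : ∀ t ∈ Set.Icc (0:ℝ) L, Real.exp (-φ t) ≤ δ (γ t) / δ x₀ := by
    intro t ht
    have h6 := hlog t L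
    have h7 := aux_dlip (G := G) (γ L) (γ t)
    have h8 := h1.dist_le_mul L t
    rw [Real.dist_eq] at h8
    simp only [NNReal.coe_one, one_mul] at h8
    have h9 : |∫ τ in t..L, ρ τ| = φ t := abs_of_nonneg (hφ0 t ht.2)
    rw [h9] at h6
    rw [h3] at h7 h8
    rw [le_div_iff₀ hδ0, Real.exp_neg, inv_mul_le_iff₀ (Real.exp_pos _)]
    simp only [hδ]
    nlinarith
  have hKb : K ≤ (1/β) * Real.log (1 / δ x) + (c+1) := by
    have := h5 0 ⟨le_rfl, h0⟩
    rw [h2] at this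
    exact this
  have hK0 : 0 ≤ K := hφ0 0 h0
  -- choice of times
  set M : ℕ := ⌈16 * K⌉₊ + 1 with hM
  have hMpos : (0:ℝ) < M := by rw [hM]; positivity
  have hMK : K / M ≤ 1/16 := by
    rw [div_le_iff₀ hMpos, hM]
    have := Nat.le_ceil (16 * K)
    push_cast; linarith
  have hL0 : φ L = 0 := by simp [hφ]
  have htk : ∀ k : ℕ, ∃ t ∈ Set.Icc (0:ℝ) L, k ≤ M → φ t = K - K * k / M := by
    intro k
    by_cases hk : k ≤ M
    · have hmem : K - K * k / M ∈ Set.Icc (φ L) (φ 0) := by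
        rw [hL0]
        have hk' : (k:ℝ) ≤ M := by exact_mod_cast hk
        constructor
        · rw [sub_nonneg, div_le_iff₀ hMpos]
          exact mul_le_mul_of_nonneg_left hk' hK0
        · have : 0 ≤ K * k / M := by positivity
          linarith
      obtain ⟨t, ht, h⟩ := intermediate_value_Icc' h0 hφc.continuousOn hmem
      exact ⟨t, ht, fun _ => h⟩
    · exact ⟨0, ⟨le_rfl, h0⟩, fun h => absurd h hk⟩
  choose T hT hTφ using htk
  have hinj : ∀ s t, φ s = φ t → s = t := by
    intro s t hst
    have h6 := hlog s t
    have h7 : |∫ τ in s..t, ρ τ| = 0 := by rw [← hadd, hst]; simp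
    rw [h7] at h6
    simp only [Real.exp_zero, sub_self, mul_zero] at h6
    have := abs_nonpos_iff.1 h6
    linarith
  have hdx : 0 < δ x := aux_dpos hn hGo hGb hx
  refine ⟨M, fun k => γ (T k), ?_, ?_, fun k => h4 _, ?_, ?_, ?_, ?_⟩
  · have : T 0 = 0 := hinj _ _ (by rw [hTφ 0 (Nat.zero_le _)]; simp [hK])
    show γ (T 0) = x
    rw [this, h2]
  · have : T M = L := hinj _ _ (by rw [hTφ M le_rfl, hL0]; field_simp; simp)
    show γ (T M) = x₀
    rw [this, h3]
  · intro k hk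
    have h6 := hlog (T k) (T (k+1))
    have h7 : ∫ τ in (T k)..(T (k+1)), ρ τ = K / M := by
      rw [← hadd, hTφ k hk.le, hTφ (k+1) hk]; push_cast; ring
    rw [h7, abs_of_nonneg (div_nonneg hK0 hMpos.le : (0:ℝ) ≤ K / M)] at h6
    have h8 := h1.dist_le_mul (T k) (T (k+1))
    rw [Real.dist_eq, abs_sub_comm] at h8
    simp only [NNReal.coe_one, one_mul] at h8
    have h9 : Real.exp (K / M) ≤ 9/8 := by
      have e1 : Real.exp (K/M) ≤ Real.exp (1/16) := Real.exp_le_exp.2 hMK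
      have e2 := Real.add_one_le_exp (-(1/16) : ℝ)
      rw [Real.exp_neg] at e2
      have e3 : Real.exp (1/16) ≤ 16/15 := by
        rw [← inv_inv (Real.exp (1/16))]
        rw [inv_le_comm₀ (by positivity) (by norm_num)]
        linarith
      linarith
    have := hd (T k)
    have : δ (γ (T k)) * (Real.exp (K/M) - 1) ≤ δ (γ (T k)) * (1/8) := by gcongr; linarith
    simp only [hδ] at this
    show dist (γ (T k)) (γ (T (k+1))) ≤ Metric.infDist (γ (T k)) (frontier G) / 8
    linarith
  · intro k hk
    have h6 := hlen (T k) (hT k)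
    have h7 := hlow (T k) (hT k)
    have h8 := h1.dist_le_mul 0 (T k)
    rw [Real.dist_eq, h2] at h8
    simp only [NNReal.coe_one, one_mul, zero_sub, abs_neg, abs_of_nonneg (hT k).1] at h8
    have h9 : Real.exp (-β * φ (T k)) ≤ (δ x₀)⁻¹ ^ β * δ (γ (T k)) ^ β := by
      have : Real.exp (-β * φ (T k)) = Real.exp (-φ (T k)) ^ β := by
        rw [← Real.exp_mul]; ring_nf
      rw [this, ← Real.mul_rpow (by positivity) (hd _).le]
      refine Real.rpow_le_rpow (Real.exp_pos _).le ?_ hβ.le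
      rw [inv_mul_eq_div]; exact h7
    calc dist x (γ (T k)) ≤ A / β * Real.exp (-β * φ (T k)) := h8.trans h6
      _ ≤ A / β * ((δ x₀)⁻¹ ^ β * δ (γ (T k)) ^ β) := by gcongr
      _ = A / β * (δ x₀)⁻¹ ^ β * δ (γ (T k)) ^ β := by ring
      _ ≤ _ := by
        gcongr
        · exact Real.rpow_nonneg (hd _).le _
        · have : 0 ≤ Real.exp (c+1) / δ x₀ := by positivity
          linarith
  · intro k hk
    have h7 := hlow (T k) (hT k)
    have h8 : φ (T k) ≤ K := hφanti _ _ (hT k).1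
    have h9 : δ x ^ (1/β) * Real.exp (-(c+1)) ≤ Real.exp (-K) := by
      rw [Real.rpow_def_of_pos hdx, ← Real.exp_add, Real.exp_le_exp]
      rw [one_div (δ x), Real.log_inv] at hKb
      linarith
    have h10 : Real.exp (-K) ≤ Real.exp (-φ (T k)) := Real.exp_le_exp.2 (by linarith)
    have h11 : δ x ^ (1/β) ≤ Real.exp (c+1) / δ x₀ * δ (γ (T k)) := by
      have h12 : δ x ^ (1/β) * Real.exp (-(c+1)) ≤ δ (γ (T k)) / δ x₀ := by linarith
      rw [Real.exp_neg, ← div_eq_mul_inv, div_le_iff₀ (Real.exp_pos _)] at h12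
      refine h12.trans (le_of_eq ?_)
      ring
    refine h11.trans ?_
    gcongr
    · exact (hd _).le
    · have : 0 ≤ A / β * (δ x₀)⁻¹ ^ β := by positivity
      linarith
  · have := Nat.ceil_lt_add_one (a := 16 * K) (by positivity)
    rw [hM]; push_cast
    simp only [hδ] at hKb
    linarith

end PoincareAux

section PoincareAux

theorem aux_whitney {n : ℕ} (hn : 2 ≤ n) {G : Set (EuclideanSpace ℝ (Fin n))} (hGo : IsOpen G)
    (hGb : Bornology.IsBounded G) (hne : G.Nonempty) :
    ∃ S : Set (EuclideanSpace ℝ (Fin n)), S.Countable ∧ S ⊆ G ∧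
      S.PairwiseDisjoint (fun x => Metric.closedBall x (Metric.infDist x (frontier G) / 100)) ∧
      G ⊆ ⋃ x ∈ S, Metric.closedBall x (Metric.infDist x (frontier G) / 25) := by
  obtain ⟨D, hD1, hD⟩ := aux_dbdd hn hGb hne
  obtain ⟨S, hS, hdisj, hcov⟩ := Vitali.exists_disjoint_subfamily_covering_enlargement_closedBall G
    id (fun x => Metric.infDist x (frontier G) / 100) D
    (fun x hx => by have := hD x hx; linarith) 4 (by norm_num)
  refine ⟨S, ?_, hS, hdisj, ?_⟩
  · refine hdisj.countable_of_nonempty_interior fun x hx => ?_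
    have := aux_dpos hn hGo hGb (hS hx)
    exact ⟨x, Metric.ball_subset_interior_closedBall (Metric.mem_ball_self (by positivity))⟩
  · intro x hx
    obtain ⟨b, hb, hsub⟩ := hcov x hx
    have := aux_dpos hn hGo hGb hx
    have h2 := hsub (Metric.mem_closedBall_self (by positivity))
    refine Set.mem_biUnion hb ?_
    simp only [id] at h2
    convert h2 using 2
    ring

theorem aux_pack {n : ℕ} (hn : 2 ≤ n) {G : Set (EuclideanSpace ℝ (Fin n))} (hGo : IsOpen G)
    (hGb : Bornology.IsBounded G) {S : Set (EuclideanSpace ℝ (Fin n))} (hS : S.Countable)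
    (hSG : S ⊆ G)
    (hdisj : S.PairwiseDisjoint (fun x => Metric.closedBall x (Metric.infDist x (frontier G) / 100)))
    (P : EuclideanSpace ℝ (Fin n) → Prop) (y : EuclideanSpace ℝ (Fin n)) {R : ℝ} (hR : 0 ≤ R)
    (hP : ∀ x ∈ S, P x → dist x y + Metric.infDist x (frontier G) / 100 ≤ R) :
    ∑' i : S, Set.indicator {x | P x}
      (fun x => ENNReal.ofReal (Metric.infDist x (frontier G) ^ n)) (i : EuclideanSpace ℝ (Fin n))
      ≤ ENNReal.ofReal ((100 * R) ^ n) := by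
  have : Countable S := hS.to_subtype
  have : Nonempty (Fin n) := ⟨⟨0, by omega⟩⟩
  set v := volume (Metric.ball (0 : EuclideanSpace ℝ (Fin n)) 1) with hv
  have hv0 : v ≠ 0 := (Metric.measure_ball_pos _ _ one_pos).ne'
  have hvt : v ≠ ⊤ := measure_ball_lt_top.ne
  have key : ∑' i : S, Set.indicator {x | P x}
      (fun x => volume (Metric.closedBall x (Metric.infDist x (frontier G) / 100)))
        (i : EuclideanSpace ℝ (Fin n)) ≤ volume (Metric.closedBall y R) := by
    have e : ∀ i : S, Set.indicator {x | P x}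
      (fun x => volume (Metric.closedBall x (Metric.infDist x (frontier G) / 100)))
        (i : EuclideanSpace ℝ (Fin n)) = volume {z | z ∈ Metric.closedBall (i : EuclideanSpace ℝ (Fin n)) (Metric.infDist (i : EuclideanSpace ℝ (Fin n)) (frontier G) / 100) ∧ P i} := by
      intro i
      by_cases h : P i
      · rw [Set.indicator_of_mem (show (i : EuclideanSpace ℝ (Fin n)) ∈ {x | P x} from h)]; simp [h, Metric.closedBall]
      · rw [Set.indicator_of_notMem (show (i : EuclideanSpace ℝ (Fin n)) ∉ {x | P x} from h)]; simp [h]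
    simp_rw [e]
    rw [← measure_iUnion]
    · refine measure_mono (Set.iUnion_subset fun i z hz => ?_)
      have h1 := hP i i.2 hz.2
      have h2 := hz.1
      rw [Metric.mem_closedBall] at h2 ⊢
      linarith [dist_triangle z i y]
    · intro i j hij
      have := hdisj i.2 j.2 (fun h => hij (Subtype.ext h))
      exact this.mono (fun z hz => hz.1) (fun z hz => hz.1)
    · intro i
      by_cases h : P i
      · simp only [h, and_true]; exact measurableSet_closedBall
      · simp [h]
  have e2 : ∀ i : S, Set.indicator {x | P x}
      (fun x => ENNReal.ofReal (Metric.infDist x (frontier G) ^ n)) (i : EuclideanSpace ℝ (Fin n)) * v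
      = ENNReal.ofReal (100 ^ n) * Set.indicator {x | P x}
      (fun x => volume (Metric.closedBall x (Metric.infDist x (frontier G) / 100)))
        (i : EuclideanSpace ℝ (Fin n)) := by
    intro i
    by_cases h : P i
    · have h' : (i : EuclideanSpace ℝ (Fin n)) ∈ {x | P x} := h
      rw [Set.indicator_of_mem h', Set.indicator_of_mem h']
      have hd := aux_dpos hn hGo hGb (hSG i.2)
      rw [Measure.addHaar_closedBall _ _ (by positivity), finrank_euclideanSpace_fin, ← mul_assoc,
        ← ENNReal.ofReal_mul (by positivity), ← mul_pow]
      congr 3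
      ring
    · have h' : (i : EuclideanSpace ℝ (Fin n)) ∉ {x | P x} := h
      rw [Set.indicator_of_notMem h', Set.indicator_of_notMem h']; simp
  rw [← ENNReal.mul_le_mul_iff_left hv0 hvt, ← ENNReal.tsum_mul_right]
  simp_rw [e2]
  rw [ENNReal.tsum_mul_left]
  calc _ ≤ ENNReal.ofReal (100 ^ n) * volume (Metric.closedBall y R) := by gcongr
    _ = _ := by
      rw [Measure.addHaar_closedBall _ _ hR, finrank_euclideanSpace_fin, ← mul_assoc,
        ← ENNReal.ofReal_mul (by positivity), ← mul_pow]

theorem aux_mink {n : ℕ} (hn : 2 ≤ n) {G : Set (EuclideanSpace ℝ (Fin n))}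
    (hGb : Bornology.IsBounded G) {l l' : ℝ} (hl : 0 ≤ l) (hll : l < l')
    (hdim : upperMinkowskiDim n (frontier G) ≤ l) :
    ∃ K : ℝ≥0∞, K ≠ ⊤ ∧ ∃ r0 : ℝ, 0 < r0 ∧ ∀ r, 0 < r → r < r0 →
      volume (⋃ x ∈ frontier G, Metric.ball x r) ≤ K * ENNReal.ofReal (r ^ ((n:ℝ) - l')) := by
  have hfin : volume (⋃ x ∈ frontier G, Metric.ball x 1) < ⊤ := by
    rw [← Metric.thickening_eq_biUnion_ball]
    have hb : Bornology.IsBounded (frontier G) := hGb.closure.subset frontier_subset_closure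
    exact hb.thickening.measure_lt_top
  have hbdd : BddAbove {l : ℝ | 0 ≤ l ∧ Filter.limsup
      (fun r => minkowskiPrecontent n (frontier G) l r) (nhdsWithin 0 (Set.Ioi 0)) = ⊤} := by
    refine ⟨n, fun a ha => ?_⟩
    by_contra! hlt
    refine absurd ha.2 (ne_of_lt (lt_of_le_of_lt (Filter.limsup_le_of_le (h := ?_)) hfin))
    have h1 : Set.Ioo (0:ℝ) 1 ∈ nhdsWithin (0:ℝ) (Set.Ioi 0) := Ioo_mem_nhdsGT one_pos
    filter_upwards [h1] with r hr
    unfold minkowskiPrecontent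
    refine ENNReal.div_le_of_le_mul ?_
    have h2 : (1:ℝ≥0∞) ≤ ENNReal.ofReal (r ^ ((n:ℝ) - a)) := by
      rw [← ENNReal.ofReal_one]
      exact ENNReal.ofReal_le_ofReal
        (Real.one_le_rpow_of_pos_of_le_one_of_nonpos hr.1 hr.2.le (by linarith))
    calc volume (⋃ x ∈ frontier G, Metric.ball x r)
        ≤ volume (⋃ x ∈ frontier G, Metric.ball x 1) :=
          measure_mono (Set.iUnion₂_mono fun x _ => Metric.ball_subset_ball hr.2.le)
      _ ≤ _ := le_mul_of_one_le_right' h2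
  have hne : Filter.limsup (fun r => minkowskiPrecontent n (frontier G) l' r)
      (nhdsWithin 0 (Set.Ioi 0)) ≠ ⊤ := by
    intro h
    have := le_csSup hbdd (show l' ∈ _ from ⟨by linarith, h⟩)
    have h3 : l' ≤ upperMinkowskiDim n (frontier G) := this
    linarith
  obtain ⟨K, hK1, hK2⟩ := ENNReal.lt_iff_exists_nnreal_btwn.1 (lt_top_iff_ne_top.2 hne)
  refine ⟨K, hK2.ne, ?_⟩
  have hev := Filter.eventually_lt_of_limsup_lt hK1
  rw [eventually_nhdsWithin_iff, Metric.eventually_nhds_iff] at hev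
  obtain ⟨r0, hr0, h⟩ := hev
  refine ⟨r0, hr0, fun r h1 h2 => ?_⟩
  have h3 := h (y := r) (by rwa [dist_zero_right, Real.norm_of_nonneg h1.le]) h1
  unfold minkowskiPrecontent at h3
  have hpos : 0 < r ^ ((n:ℝ) - l') := Real.rpow_pos_of_pos h1 _
  rw [ENNReal.div_lt_iff (Or.inl (by simpa using hpos)) (Or.inl ENNReal.ofReal_ne_top)] at h3
  exact h3.le

theorem aux_int {n : ℕ} (hn : 2 ≤ n) {G : Set (EuclideanSpace ℝ (Fin n))} (hGo : IsOpen G)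
    (hGb : Bornology.IsBounded G) (hne : G.Nonempty) {l s : ℝ} (hl : 0 ≤ l)
    (hdim : upperMinkowskiDim n (frontier G) ≤ l) (hs : 0 < s) (hsl : s < n - l) :
    ∫⁻ x in G, ENNReal.ofReal ((1 / Metric.infDist x (frontier G)) ^ s) < ⊤ := by
  obtain ⟨l', h1, h2⟩ := exists_between (show l < n - s by linarith)
  obtain ⟨K, hK, r0, hr0, hm⟩ := aux_mink hn hGb hl h1 hdim
  rw [lintegral_rpow_eq_lintegral_meas_lt_mul _
    (Filter.Eventually.of_forall fun x => div_nonneg zero_le_one Metric.infDist_nonneg)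
    (measurable_const.div (Metric.continuous_infDist_pt _).measurable).aemeasurable hs]
  have hG : volume G < ⊤ := hGb.measure_lt_top
  refine ENNReal.mul_lt_top ENNReal.ofReal_lt_top ?_
  have hT : 0 < 1 / r0 := by positivity
  rw [← Set.Ioc_union_Ioi_eq_Ioi hT.le]
  refine lt_of_le_of_lt (lintegral_union_le _ _ _) (ENNReal.add_lt_top.2 ⟨?_, ?_⟩)
  · have hi : IntegrableOn (fun t : ℝ => t ^ (s - 1)) (Set.Ioc 0 (1 / r0)) := by
      have := intervalIntegral.intervalIntegrable_rpow' (a := 0) (b := 1/r0) (r := s - 1) (by linarith)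
      rwa [intervalIntegrable_iff_integrableOn_Ioc_of_le hT.le] at this
    calc _ ≤ ∫⁻ t in Set.Ioc 0 (1 / r0), volume G * ENNReal.ofReal (t ^ (s - 1)) := by
          refine setLIntegral_mono' measurableSet_Ioc fun t _ => mul_le_mul' ?_ le_rfl
          refine (measure_mono (Set.subset_univ _)).trans ?_
          simp
      _ = volume G * ∫⁻ t in Set.Ioc 0 (1 / r0), ENNReal.ofReal (t ^ (s - 1)) := by
          rw [lintegral_const_mul' _ _ hG.ne]
      _ < ⊤ := ENNReal.mul_lt_top hG hi.lintegral_lt_top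
  · have hi : IntegrableOn (fun t : ℝ => t ^ (s - 1 - (n - l'))) (Set.Ioi (1 / r0)) :=
      integrableOn_Ioi_rpow_of_lt (by linarith) hT
    calc _ ≤ ∫⁻ t in Set.Ioi (1 / r0), K * ENNReal.ofReal (t ^ (s - 1 - (n - l'))) := by
          refine setLIntegral_mono' measurableSet_Ioi fun t ht => ?_
          have ht : 1 / r0 < t := ht
          have ht0 : 0 < t := hT.trans ht
          have htr : 1 / t < r0 := by rwa [one_div_lt ht0 hr0]
          have h3 := hm (1/t) (by positivity) htr
          have e : t ^ (s - 1 - (n - l')) = (1/t) ^ ((n:ℝ) - l') * t ^ (s - 1) := by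
            rw [Real.rpow_sub ht0, one_div, Real.inv_rpow ht0.le]; field_simp
          rw [e, ENNReal.ofReal_mul (by positivity), ← mul_assoc]
          gcongr
          refine le_trans ?_ h3
          refine (Measure.restrict_apply_le _ _).trans (measure_mono fun x hx => ?_)
          have hx : t < 1 / Metric.infDist x (frontier G) := hx
          have hx0 : 0 < Metric.infDist x (frontier G) := by
            by_contra! hle
            have := div_nonpos_of_nonneg_of_nonpos zero_le_one hle
            linarith
          rw [lt_one_div ht0 hx0] at hx
          obtain ⟨y, hy, hxy⟩ := (Metric.infDist_lt_iff (aux_frontier_nonempty hn hGb hne)).1 hx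
          exact Set.mem_biUnion hy hxy
      _ = K * ∫⁻ t in Set.Ioi (1 / r0), ENNReal.ofReal (t ^ (s - 1 - (n - l'))) := by
          rw [lintegral_const_mul' _ _ hK]
      _ < ⊤ := ENNReal.mul_lt_top hK.lt_top hi.lintegral_lt_top

theorem aux_sum {n : ℕ} (hn : 2 ≤ n) {G : Set (EuclideanSpace ℝ (Fin n))} (hGo : IsOpen G)
    (hGb : Bornology.IsBounded G) (hne : G.Nonempty) {l s : ℝ} (hl : 0 ≤ l)
    (hdim : upperMinkowskiDim n (frontier G) ≤ l) (hs : 0 < s) (hsl : s < n - l)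
    {S : Set (EuclideanSpace ℝ (Fin n))} (hS : S.Countable) (hSG : S ⊆ G)
    (hdisj : S.PairwiseDisjoint (fun x => Metric.closedBall x (Metric.infDist x (frontier G) / 100))) :
    ∑' i : S, ENNReal.ofReal (Metric.infDist (i : EuclideanSpace ℝ (Fin n)) (frontier G) ^ ((n:ℝ) - s))
      < ⊤ := by
  have : Countable S := hS.to_subtype
  have : Nonempty (Fin n) := ⟨⟨0, by omega⟩⟩
  have hint := aux_int hn hGo hGb hne hl hdim hs hsl
  set v := volume (Metric.ball (0 : EuclideanSpace ℝ (Fin n)) 1) with hv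
  have hv0 : v ≠ 0 := (Metric.measure_ball_pos _ _ one_pos).ne'
  have hvt : v ≠ ⊤ := measure_ball_lt_top.ne
  have hi : ∀ i : S, ENNReal.ofReal (Metric.infDist (i : EuclideanSpace ℝ (Fin n)) (frontier G) ^ ((n:ℝ) - s)) * v
      ≤ ENNReal.ofReal (2 ^ s * 100 ^ n) * ∫⁻ x in Metric.closedBall (i : EuclideanSpace ℝ (Fin n))
        (Metric.infDist (i : EuclideanSpace ℝ (Fin n)) (frontier G) / 100),
          ENNReal.ofReal ((1 / Metric.infDist x (frontier G)) ^ s) := by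
    intro i
    have hd := aux_dpos hn hGo hGb (hSG i.2)
    set d := Metric.infDist (i : EuclideanSpace ℝ (Fin n)) (frontier G) with hdd
    have h1 : ENNReal.ofReal ((1 / (2 * d)) ^ s) * volume (Metric.closedBall (i : EuclideanSpace ℝ (Fin n)) (d / 100))
        ≤ ∫⁻ x in Metric.closedBall (i : EuclideanSpace ℝ (Fin n)) (d / 100),
          ENNReal.ofReal ((1 / Metric.infDist x (frontier G)) ^ s) := by
      rw [← setLIntegral_const]
      refine setLIntegral_mono' measurableSet_closedBall fun x hx => ?_
      have hx : dist x i ≤ d / 100 := hx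
      have h2 := aux_dlip (G := G) x i
      have h3 := aux_dlip (G := G) i x
      rw [dist_comm] at h3
      have h4 : 0 < Metric.infDist x (frontier G) := by linarith
      refine ENNReal.ofReal_le_ofReal (Real.rpow_le_rpow (by positivity) ?_ hs.le)
      exact one_div_le_one_div_of_le h4 (by linarith)
    refine le_trans (le_of_eq ?_) (mul_le_mul_right h1 _)
    rw [Measure.addHaar_closedBall _ _ (by positivity), finrank_euclideanSpace_fin, ← mul_assoc,
      ← mul_assoc, ← ENNReal.ofReal_mul (by positivity), ← ENNReal.ofReal_mul (by positivity)]
    congr 2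
    rw [Real.rpow_sub hd, one_div, Real.inv_rpow (by positivity), Real.mul_rpow (by norm_num) hd.le,
      Real.rpow_natCast, div_pow]
    have : (0:ℝ) < 2 ^ s := by positivity
    have : (0:ℝ) < d ^ s := by positivity
    field_simp
  have htot : (∑' i : S, ENNReal.ofReal
      (Metric.infDist (i : EuclideanSpace ℝ (Fin n)) (frontier G) ^ ((n:ℝ) - s))) * v < ⊤ := by
    rw [← ENNReal.tsum_mul_right]
    refine lt_of_le_of_lt (ENNReal.tsum_le_tsum hi) ?_
    rw [ENNReal.tsum_mul_left, ← lintegral_iUnion]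
    · refine ENNReal.mul_lt_top ENNReal.ofReal_lt_top (lt_of_le_of_lt (lintegral_mono_set ?_) hint)
      refine Set.iUnion_subset fun i => ?_
      have hd := aux_dpos hn hGo hGb (hSG i.2)
      exact (Metric.closedBall_subset_ball (by linarith)).trans (aux_ball_sub hGo (hSG i.2) hd)
    · exact fun i => measurableSet_closedBall
    · intro i j hij
      exact hdisj i.2 j.2 (fun h => hij (Subtype.ext h))
  by_contra! h
  rw [top_le_iff] at h
  rw [h, ENNReal.top_mul hv0] at htot
  exact lt_irrefl _ htot

end PoincareAux

section PoincareAux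

theorem aux_hold_tsum {ι : Type*} (a b : ι → ℝ≥0∞) {θ : ℝ} (h0 : 0 ≤ θ) (h1 : θ ≤ 1) :
    ∑' i, a i ^ θ * b i ^ (1 - θ) ≤ (∑' i, a i) ^ θ * (∑' i, b i) ^ (1 - θ) := by
  letI : MeasurableSpace ι := ⊤
  have := ENNReal.lintegral_mul_norm_pow_le (μ := Measure.count) (f := a) (g := b)
    measurable_from_top.aemeasurable measurable_from_top.aemeasurable h0 (sub_nonneg.2 h1) (by ring)
  simpa only [lintegral_count] using this

theorem aux_ball_hold {n : ℕ} (hn : 2 ≤ n) (g : EuclideanSpace ℝ (Fin n) → ℝ≥0∞)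
    (hg : Measurable g) {q p : ℝ} (hq : 0 < q) (hqp : q ≤ p) (z : EuclideanSpace ℝ (Fin n)) {d : ℝ}
    (hd : 0 < d) :
    ∫⁻ y in Metric.ball z (d/2), g y ^ q ≤ (∫⁻ y in Metric.ball z (d/2), g y ^ p) ^ (q/p) *
      (ENNReal.ofReal d ^ (n:ℝ) *
        volume (Metric.ball (0 : EuclideanSpace ℝ (Fin n)) 1)) ^ (1 - q/p) := by
  have hp : 0 < p := hq.trans_le hqp
  have h1 : q / p ≤ 1 := (div_le_one hp).2 hqp
  have := ENNReal.lintegral_mul_norm_pow_le (μ := volume.restrict (Metric.ball z (d/2)))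
    (f := fun y => g y ^ p) (g := fun _ => 1)
    (hg.pow_const p).aemeasurable aemeasurable_const (p := q/p) (by positivity)
    (sub_nonneg.2 h1) (by ring)
  simp only [ENNReal.one_rpow, mul_one, ← ENNReal.rpow_mul, mul_div_cancel₀ _ hp.ne',
    lintegral_const, one_mul, Measure.restrict_apply_univ] at this
  refine this.trans ?_
  gcongr
  have : Nonempty (Fin n) := ⟨⟨0, by omega⟩⟩
  rw [Measure.addHaar_ball _ _ (by positivity), finrank_euclideanSpace_fin, ENNReal.rpow_natCast,
    ← ENNReal.ofReal_pow hd.le]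
  gcongr
  linarith

theorem aux_cell {n : ℕ} (hn : 2 ≤ n) {G : Set (EuclideanSpace ℝ (Fin n))} (hGo : IsOpen G)
    (hGb : Bornology.IsBounded G) {q : ℝ} (hq : 1 ≤ q) {C : ℝ≥0∞}
    {u : EuclideanSpace ℝ (Fin n) → ℝ} {m : EuclideanSpace ℝ (Fin n) → ℝ}
    (hu : DifferentiableOn ℝ u G)
    (F : EuclideanSpace ℝ (Fin n) → ℝ≥0∞)
    (hm1 : ∀ z ∈ G, ∫⁻ y in Metric.ball z (Metric.infDist z (frontier G) / 2), ‖u y - m z‖ₑ ^ q ≤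
      C * (ENNReal.ofReal (Metric.infDist z (frontier G)) ^ q * F z))
    (hm2 : ∀ z ∈ G, ∀ z' ∈ G, dist z z' ≤ Metric.infDist z (frontier G) / 8 →
      ‖m z - m z'‖ₑ ^ q ≤ C * (ENNReal.ofReal (Metric.infDist z (frontier G)) ^ (q - n) * F z +
        ENNReal.ofReal (Metric.infDist z' (frontier G)) ^ (q - n) * F z'))
    {M : ℕ} {z : ℕ → EuclideanSpace ℝ (Fin n)} (hz : ∀ k, z k ∈ G)
    (hz2 : ∀ k < M, dist (z k) (z (k+1)) ≤ Metric.infDist (z k) (frontier G) / 8) :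
    ∫⁻ y in Metric.closedBall (z 0) (Metric.infDist (z 0) (frontier G) / 25), ‖u y - m (z M)‖ₑ ^ q ≤
      2 ^ (q - 1) * (C * (1 + 2 * volume (Metric.ball (0 : EuclideanSpace ℝ (Fin n)) 1))) *
      (ENNReal.ofReal (Metric.infDist (z 0) (frontier G)) ^ (n:ℝ) * ((M + 1 : ℕ) : ℝ≥0∞) ^ (q - 1) *
        ∑ k ∈ Finset.range (M+1), ENNReal.ofReal (Metric.infDist (z k) (frontier G)) ^ (q - n) * F (z k)) := by
  set a := fun w => ENNReal.ofReal (Metric.infDist w (frontier G)) ^ (q - n) * F w with ha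
  set v := volume (Metric.ball (0 : EuclideanSpace ℝ (Fin n)) 1) with hv
  have hch := aux_chain (C := C) (m := m) (a := a) (z := z) (M := M) hq
    (fun k hk => hm2 _ (hz k) _ (hz (k+1)) (hz2 k hk))
  set d := Metric.infDist (z 0) (frontier G) with hdd
  have hd : 0 < d := aux_dpos hn hGo hGb (hz 0)
  set Δ := ENNReal.ofReal d with hΔ
  have hΔ0 : Δ ≠ 0 := by simpa [hΔ] using hd
  have hΔt : Δ ≠ ⊤ := ENNReal.ofReal_ne_top
  have hsub : Metric.closedBall (z 0) (d / 25) ⊆ Metric.ball (z 0) (d/2) :=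
    Metric.closedBall_subset_ball (by linarith)
  set N : ℝ≥0∞ := ((M + 1 : ℕ) : ℝ≥0∞) ^ (q - 1) with hN
  have hN1 : 1 ≤ N := by
    have h := ENNReal.rpow_le_rpow (z := q - 1) (show (1:ℝ≥0∞) ≤ ((M + 1 : ℕ) : ℝ≥0∞) by simp)
      (by linarith)
    rwa [ENNReal.one_rpow] at h
  set sg := ∑ k ∈ Finset.range (M+1), a (z k) with hsg
  have hmeas : AEMeasurable (fun y => ‖u y - m (z 0)‖ₑ ^ q)
      (volume.restrict (Metric.closedBall (z 0) (d / 25))) := by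
    have hc : ContinuousOn u (Metric.closedBall (z 0) (d / 25)) := hu.continuousOn.mono
      (hsub.trans ((Metric.ball_subset_ball (by linarith)).trans (aux_ball_sub hGo (hz 0) hd)))
    exact (((hc.aemeasurable measurableSet_closedBall).sub_const _).enorm).pow_const _
  have hvol : volume (Metric.closedBall (z 0) (d / 25)) ≤ Δ ^ (n:ℝ) * v := by
    have : Nonempty (Fin n) := ⟨⟨0, by omega⟩⟩
    rw [Measure.addHaar_closedBall _ _ (by positivity), finrank_euclideanSpace_fin, ENNReal.rpow_natCast,
      ← ENNReal.ofReal_pow hd.le]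
    gcongr
    linarith
  have h1 : ∫⁻ y in Metric.closedBall (z 0) (d / 25), ‖u y - m (z 0)‖ₑ ^ q ≤
      C * (Δ ^ (n:ℝ) * N * sg) := by
    calc _ ≤ ∫⁻ y in Metric.ball (z 0) (d/2), ‖u y - m (z 0)‖ₑ ^ q := lintegral_mono_set hsub
      _ ≤ C * (Δ ^ q * F (z 0)) := hm1 _ (hz 0)
      _ = C * (Δ ^ (n:ℝ) * 1 * a (z 0)) := by
        have : Δ ^ q = Δ ^ (n:ℝ) * Δ ^ (q - n) := by
          rw [← ENNReal.rpow_add _ _ hΔ0 hΔt]; ring_nf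
        rw [this, mul_one, ha, mul_assoc]
      _ ≤ _ := by
        gcongr
        exact Finset.single_le_sum (f := fun k => a (z k)) (fun _ _ => zero_le) (by simp)
  calc ∫⁻ y in Metric.closedBall (z 0) (d / 25), ‖u y - m (z M)‖ₑ ^ q
      ≤ ∫⁻ y in Metric.closedBall (z 0) (d / 25),
          2 ^ (q - 1) * (‖u y - m (z 0)‖ₑ ^ q + ‖m (z 0) - m (z M)‖ₑ ^ q) := by
        gcongr with y
        refine le_trans ?_ (ENNReal.rpow_add_le_mul_rpow_add_rpow _ _ hq)
        gcongr
        have : u y - m (z M) = (u y - m (z 0)) + (m (z 0) - m (z M)) := by ring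
        rw [this]
        exact enorm_add_le _ _
    _ = 2 ^ (q - 1) * ((∫⁻ y in Metric.closedBall (z 0) (d / 25), ‖u y - m (z 0)‖ₑ ^ q) +
          ‖m (z 0) - m (z M)‖ₑ ^ q * volume (Metric.closedBall (z 0) (d / 25))) := by
        rw [lintegral_const_mul' _ _ (by finiteness), lintegral_add_left' hmeas, setLIntegral_const]
    _ ≤ 2 ^ (q - 1) * (C * (Δ ^ (n:ℝ) * N * sg) + (2 * C * N * sg) * (Δ ^ (n:ℝ) * v)) := by
        gcongr
    _ = _ := by ring

end PoincareAux

section PoincareAux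

theorem aux_X {n : ℕ} (hn : 2 ≤ n) {G : Set (EuclideanSpace ℝ (Fin n))} (hGo : IsOpen G)
    (hGb : Bornology.IsBounded G) (hne : G.Nonempty) {β : ℝ} (hβ : 0 < β) (hβ1 : β ≤ 1)
    {S : Set (EuclideanSpace ℝ (Fin n))} (hS : S.Countable) (hSG : S ⊆ G)
    (hdisj : S.PairwiseDisjoint (fun x => Metric.closedBall x (Metric.infDist x (frontier G) / 100)))
    {M : S → ℕ} {z : S → ℕ → EuclideanSpace ℝ (Fin n)} (hz : ∀ i k, z i k ∈ G) {C : ℝ} (hC : 0 < C)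
    (hd : ∀ i, ∀ k ≤ M i, dist (i : EuclideanSpace ℝ (Fin n)) (z i k) ≤
      C * Metric.infDist (z i k) (frontier G) ^ β) :
    ∃ K : ℝ≥0∞, K ≠ ⊤ ∧ ∀ g : EuclideanSpace ℝ (Fin n) → ℝ≥0∞, Measurable g →
      ∑' i : S, ∑ k ∈ Finset.range (M i + 1),
        ENNReal.ofReal (Metric.infDist (i : EuclideanSpace ℝ (Fin n)) (frontier G)) ^ (n:ℝ) *
        ((M i + 1 : ℕ) : ℝ≥0∞) ^ (-1:ℝ) *
        ENNReal.ofReal (Metric.infDist (z i k) (frontier G)) ^ (-(β * n)) *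
        ∫⁻ y in Metric.ball (z i k) (Metric.infDist (z i k) (frontier G) / 2), g y
      ≤ K * ∫⁻ y in G, g y := by
  have : Countable S := hS.to_subtype
  obtain ⟨D, hD1, hD⟩ := aux_dbdd hn hGb hne
  set δ := fun w => Metric.infDist w (frontier G) with hδ
  have hpos : ∀ w ∈ G, 0 < δ w := fun w hw => aux_dpos hn hGo hGb hw
  have hdl : ∀ x y, δ x ≤ δ y + dist x y := fun x y => aux_dlip x y
  set B : S → ℕ → Set (EuclideanSpace ℝ (Fin n)) := fun i k => Metric.ball (z i k) (δ (z i k) / 2) with hB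
  have hBG : ∀ i k, B i k ⊆ G := fun i k => (Metric.ball_subset_ball
    (by have := hpos _ (hz i k); simp only [hδ] at *; linarith)).trans
      (aux_ball_sub hGo (hz i k) (hpos _ (hz i k)))
  set K : ℝ≥0∞ := ENNReal.ofReal ((3/2) ^ (β * n) * (100 * (4 * (C + D))) ^ n) with hK
  refine ⟨K, ENNReal.ofReal_ne_top, fun g hg => ?_⟩
  set w : S → ℕ → ℝ≥0∞ := fun i k => ENNReal.ofReal (δ i) ^ (n:ℝ) *
        ((M i + 1 : ℕ) : ℝ≥0∞) ^ (-1:ℝ) * ENNReal.ofReal (δ (z i k)) ^ (-(β * n)) with hw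
  have e1 : ∀ i k, w i k * ∫⁻ y in B i k, g y =
      ∫⁻ y in G, (B i k).indicator (fun y => w i k) y * g y := by
    intro i k
    have hwt : w i k ≠ ⊤ := by
      refine ENNReal.mul_ne_top (ENNReal.mul_ne_top ?_ ?_) ?_
      · exact ENNReal.rpow_ne_top_of_nonneg (by positivity) ENNReal.ofReal_ne_top
      · rw [ENNReal.rpow_neg_one]; simp
      · rw [ENNReal.ofReal_rpow_of_pos (hpos _ (hz i k))]; exact ENNReal.ofReal_ne_top
    have e : ∀ y, (B i k).indicator (fun y => w i k) y * g y =
        (B i k).indicator (fun y => w i k * g y) y := by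
      intro y
      by_cases h : y ∈ B i k <;> simp [h]
    simp_rw [e]
    rw [setLIntegral_indicator Metric.isOpen_ball.measurableSet, lintegral_const_mul' _ _ hwt,
      Set.inter_eq_left.2 (hBG i k)]
  have hmeas : ∀ i k, Measurable (fun y => (B i k).indicator (fun y => w i k) y * g y) := fun i k =>
    (measurable_const.indicator Metric.isOpen_ball.measurableSet).mul hg
  calc _ = ∑' i : S, ∑ k ∈ Finset.range (M i + 1), w i k * ∫⁻ y in B i k, g y := rfl
    _ = ∫⁻ y in G, ∑' i : S, ∑ k ∈ Finset.range (M i + 1), (B i k).indicator (fun y => w i k) y * g y := by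
      simp_rw [e1]
      rw [lintegral_tsum fun i => (Finset.measurable_fun_sum _ fun k _ => hmeas i k).aemeasurable]
      refine tsum_congr fun i => ?_
      rw [lintegral_finset_sum _ fun k _ => hmeas i k]
    _ ≤ ∫⁻ y in G, K * g y := by
      refine setLIntegral_mono' hGo.measurableSet fun y hy => ?_
      simp_rw [← Finset.sum_mul]
      rw [ENNReal.tsum_mul_right]
      gcongr
      have hy0 := hpos y hy
      set P : EuclideanSpace ℝ (Fin n) → Prop := fun x => ∃ h : x ∈ S, ∃ k ≤ M ⟨x, h⟩, y ∈ B ⟨x, h⟩ k with hP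
      have hpk := aux_pack hn hGo hGb hS hSG hdisj P y (R := 4 * (C + D) * δ y ^ β) (by positivity) ?_
      · have hi : ∀ i : S, ∑ k ∈ Finset.range (M i + 1), (B i k).indicator (fun y => w i k) y ≤
            ENNReal.ofReal ((3/2) ^ (β * n) * δ y ^ (-(β * n))) * Set.indicator {x | P x}
              (fun x => ENNReal.ofReal (δ x ^ n)) (i : EuclideanSpace ℝ (Fin n)) := by
          intro i
          by_cases h : P i
          · rw [Set.indicator_of_mem (show (i : EuclideanSpace ℝ (Fin n)) ∈ {x | P x} from h)]
            have hk : ∀ k ∈ Finset.range (M i + 1), (B i k).indicator (fun y => w i k) y ≤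
                ENNReal.ofReal (δ i ^ n) * ((M i + 1 : ℕ) : ℝ≥0∞) ^ (-1:ℝ) *
                  ENNReal.ofReal ((3/2) ^ (β * n) * δ y ^ (-(β * n))) := by
              intro k _
              by_cases hyk : y ∈ B i k
              · rw [Set.indicator_of_mem hyk]
                simp only [hw]
                rw [ENNReal.rpow_natCast, ← ENNReal.ofReal_pow (hpos _ (hSG i.2)).le]
                gcongr
                have h0 := hpos _ (hz i k)
                rw [ENNReal.ofReal_rpow_of_pos h0]
                refine ENNReal.ofReal_le_ofReal ?_
                have h1 : dist y (z i k) < δ (z i k) / 2 := hyk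
                have h2 := hdl y (z i k)
                have h3 : δ y / (3/2) ≤ δ (z i k) := by linarith
                calc δ (z i k) ^ (-(β * n)) ≤ (δ y / (3/2)) ^ (-(β * n)) :=
                      Real.rpow_le_rpow_of_nonpos (by positivity) h3 (by
                        have : 0 ≤ β * n := by positivity
                        linarith)
                  _ = _ := by
                      rw [Real.div_rpow hy0.le (by norm_num), Real.rpow_neg (by norm_num : (0:ℝ) ≤ 3/2)]
                      field_simp
              · rw [Set.indicator_of_notMem hyk]; exact zero_le
            refine (Finset.sum_le_sum hk).trans (le_of_eq ?_)
            rw [Finset.sum_const, Finset.card_range, nsmul_eq_mul, ENNReal.rpow_neg_one]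
            have h1 : ((M i + 1 : ℕ) : ℝ≥0∞) * ((M i + 1 : ℕ) : ℝ≥0∞)⁻¹ = 1 :=
              ENNReal.mul_inv_cancel (by simp) (by simp)
            calc _ = (((M i + 1 : ℕ) : ℝ≥0∞) * ((M i + 1 : ℕ) : ℝ≥0∞)⁻¹) * (ENNReal.ofReal ((3/2) ^ (β * n) * δ y ^ (-(β * n))) * ENNReal.ofReal (δ i ^ n)) := by ring
              _ = _ := by rw [h1, one_mul]
          · refine le_trans (le_of_eq (Finset.sum_eq_zero fun k hk => ?_)) zero_le
            refine Set.indicator_of_notMem (fun hyk => h ?_) _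
            exact ⟨i.2, k, Nat.lt_succ_iff.1 (Finset.mem_range.1 hk), hyk⟩
        refine (ENNReal.tsum_le_tsum hi).trans ?_
        rw [ENNReal.tsum_mul_left]
        refine (mul_le_mul_right hpk _).trans (le_of_eq ?_)
        rw [← ENNReal.ofReal_mul (by positivity), hK]
        congr 1
        have h1 : (δ y ^ β) ^ n = δ y ^ (β * n) := by rw [Real.rpow_mul hy0.le, Real.rpow_natCast]
        have h2 : δ y ^ (-(β * n)) * δ y ^ (β * n) = 1 := by
          rw [← Real.rpow_add hy0]; simp
        calc _ = (3/2) ^ (β * n) * (100 * (4 * (C + D))) ^ n * (δ y ^ (-(β * n)) * (δ y ^ β) ^ n) := by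
              rw [← mul_assoc (100:ℝ), mul_pow _ (δ y ^ β)]; ring
          _ = _ := by rw [h1, h2, mul_one]
      · rintro x hx ⟨h, k, hk, hyk⟩
        have h0 := hpos _ (hz ⟨x, h⟩ k)
        have h1 : dist y (z ⟨x, h⟩ k) < δ (z ⟨x, h⟩ k) / 2 := hyk
        have h2 := hd ⟨x, h⟩ k hk
        have h2' : dist x (z ⟨x, h⟩ k) ≤ C * δ (z ⟨x, h⟩ k) ^ β := h2
        have hDz := hD _ (hz ⟨x, h⟩ k)
        have hDz' : δ (z ⟨x, h⟩ k) ≤ D := hDz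
        set t := δ (z ⟨x, h⟩ k) with ht
        have h3 := hdl x (z ⟨x, h⟩ k)
        have h4 := hdl (z ⟨x, h⟩ k) y
        rw [dist_comm] at h4
        have h5 : t ≤ 2 * δ y := by linarith
        have h6 : t ^ β ≤ 2 * δ y ^ β := by
          calc t ^ β ≤ (2 * δ y) ^ β := Real.rpow_le_rpow h0.le h5 hβ.le
            _ = 2 ^ β * δ y ^ β := Real.mul_rpow (by norm_num) hy0.le
            _ ≤ 2 * δ y ^ β := by
              gcongr
              calc (2:ℝ) ^ β ≤ 2 ^ (1:ℝ) := Real.rpow_le_rpow_of_exponent_le (by norm_num) hβ1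
                _ = 2 := Real.rpow_one 2
        have h7 : t ≤ D * t ^ β := by
          calc t = t ^ (1 - β) * t ^ β := by rw [← Real.rpow_add h0]; simp
            _ ≤ D * t ^ β := by
              gcongr
              calc t ^ (1 - β) ≤ D ^ (1 - β) := Real.rpow_le_rpow h0.le hDz' (by linarith)
                _ ≤ D ^ (1:ℝ) := Real.rpow_le_rpow_of_exponent_le hD1 (by linarith)
                _ = D := Real.rpow_one D
        have h8 : dist x y ≤ dist x (z ⟨x, h⟩ k) + dist y (z ⟨x, h⟩ k) := dist_triangle_right _ _ _
        have h9 : (C + D) * t ^ β ≤ (C + D) * (2 * δ y ^ β) := by gcongr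
        have h10 : δ x ≤ (C + D) * t ^ β := by linarith
        have h11 : 0 ≤ (C + D) * δ y ^ β := by positivity
        have h12 : 0 ≤ D * t ^ β := by positivity
        show dist x y + δ x / 100 ≤ 4 * (C + D) * δ y ^ β
        nlinarith
    _ = K * ∫⁻ y in G, g y := lintegral_const_mul' _ _ ENNReal.ofReal_ne_top

theorem aux_Y_real {D β c C e κ l' : ℝ} (hD : 1 ≤ D) (hβ : 0 < β) (hC : 0 < C) (hκ : 0 ≤ κ)
    (hl : 0 < l') (he : 0 < e + β * l') :
    ∃ s K : ℝ, 0 < s ∧ s < l' ∧ 0 < K ∧ ∀ t d N : ℝ, 0 < t → t ≤ D → 0 < d → d ≤ D → 1 ≤ N →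
      t ^ (1/β) ≤ C * d → N ≤ 16 * ((1 / β) * Real.log (1 / t) + (c + 1)) + 3 →
      N ^ (κ + 1) * d ^ e ≤ K * t ^ (-s) := by
  set e' := min e (-(β * l')/2) with he'
  have hbl : 0 < β * l' := by positivity
  have h1 : e' ≤ e := min_le_left _ _
  have h2 : e' < 0 := lt_of_le_of_lt (min_le_right _ _) (by linarith)
  have h3 : 0 < e' + β * l' := by
    rcases min_cases e (-(β * l')/2) with h | h <;> rw [he', h.1] <;> linarith
  have h4 : -e'/β < l' := by rw [div_lt_iff₀ hβ]; linarith
  obtain ⟨s, hs1, hs2⟩ := exists_between h4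
  have hs0 : 0 < -e'/β := div_pos (by linarith) hβ
  set η := s + e'/β with hη
  have hη0 : 0 < η := by rw [hη]; have : -e'/β = -(e'/β) := neg_div _ _; linarith
  set ε := η / (κ + 1) with hε
  have hε0 : 0 < ε := by positivity
  set K1 := 16 / β / ε + |16 * (c+1) + 3| * D ^ ε with hK1
  have hK10 : 0 < K1 := by positivity
  refine ⟨s, K1 ^ (κ + 1) * (D ^ (e - e') * C ^ (-e')), by linarith, hs2, by positivity, ?_⟩
  intro t d N ht htD hd hdD hN hCd hNl
  have hN' : N ≤ K1 * t ^ (-ε) := by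
    have h5 := Real.log_le_rpow_div (x := 1/t) (by positivity) hε0
    rw [one_div, Real.inv_rpow ht.le, ← Real.rpow_neg ht.le, ← one_div] at h5
    have h6 : 1 ≤ D ^ ε * t ^ (-ε) := by
      rw [Real.rpow_neg ht.le, ← div_eq_mul_inv, one_le_div (by positivity)]
      exact Real.rpow_le_rpow ht.le htD hε0.le
    have h7 : 16 * (c+1) + 3 ≤ |16 * (c+1) + 3| * (D ^ ε * t ^ (-ε)) :=
      (le_abs_self _).trans (le_mul_of_one_le_right (abs_nonneg _) h6)
    have h8 : 16 * (1/β) * Real.log (1/t) ≤ 16 * (1/β) * (t ^ (-ε) / ε) := by gcongr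
    calc N ≤ 16 * (1/β) * (t ^ (-ε) / ε) + |16 * (c+1) + 3| * (D ^ ε * t ^ (-ε)) := by linarith
      _ = _ := by rw [hK1]; ring
  have hN2 : N ^ (κ + 1) ≤ K1 ^ (κ+1) * t ^ (-η) := by
    calc N ^ (κ + 1) ≤ (K1 * t ^ (-ε)) ^ (κ + 1) := Real.rpow_le_rpow (by linarith) hN' (by linarith)
      _ = _ := by
        rw [Real.mul_rpow hK10.le (by positivity), ← Real.rpow_mul ht.le]
        congr 2
        rw [hε]; field_simp
  have hd1 : d ^ e ≤ D ^ (e - e') * (C ^ (-e') * t ^ (e'/β)) := by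
    calc d ^ e = d ^ (e - e') * d ^ e' := by rw [← Real.rpow_add hd]; ring_nf
      _ ≤ D ^ (e - e') * (C ^ (-e') * t ^ (e'/β)) := by
        gcongr
        · have h5 : t ^ (1/β) / C ≤ d := by rw [div_le_iff₀ hC]; linarith
          calc d ^ e' ≤ (t ^ (1/β) / C) ^ e' := Real.rpow_le_rpow_of_nonpos (by positivity) h5 h2.le
            _ = _ := by
              rw [Real.div_rpow (by positivity) hC.le, ← Real.rpow_mul ht.le, Real.rpow_neg hC.le,
                one_div_mul_eq_div]
              field_simp
  calc N ^ (κ + 1) * d ^ e ≤ (K1 ^ (κ+1) * t ^ (-η)) * (D ^ (e - e') * (C ^ (-e') * t ^ (e'/β))) := by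
        gcongr
    _ = K1 ^ (κ + 1) * (D ^ (e - e') * C ^ (-e')) * (t ^ (-η) * t ^ (e'/β)) := by ring
    _ = _ := by
        rw [← Real.rpow_add ht]
        congr 2
        rw [hη]; ring

end PoincareAux

section PoincareAux

theorem aux_term {Δ N d v H : ℝ≥0∞} (hΔ0 : Δ ≠ 0) (hΔt : Δ ≠ ⊤) (hN0 : N ≠ 0) (hNt : N ≠ ⊤)
    (hd0 : d ≠ 0) (hdt : d ≠ ⊤) {n q θ κ e b : ℝ} (h0 : 0 ≤ θ) (h1 : 0 ≤ 1 - θ)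
    (hκ : κ * (1 - θ) = q - 1 + θ) (he : e * (1 - θ) = q - n * θ + b * θ) :
    Δ ^ n * N ^ (q - 1) * (d ^ (q - n) * (H ^ θ * (d ^ n * v) ^ (1 - θ))) =
      v ^ (1 - θ) * ((Δ ^ n * N ^ (-1:ℝ) * d ^ (-b) * H) ^ θ * (Δ ^ n * N ^ κ * d ^ e) ^ (1 - θ)) := by
  simp only [ENNReal.mul_rpow_of_nonneg _ _ h0, ENNReal.mul_rpow_of_nonneg _ _ h1,
    ← ENNReal.rpow_mul, hκ, he]
  have e1 : Δ ^ n = Δ ^ (n * θ) * Δ ^ (n * (1 - θ)) := by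
    rw [← ENNReal.rpow_add _ _ hΔ0 hΔt]; ring_nf
  have e2 : N ^ (q - 1) = N ^ (-1 * θ) * N ^ (q - 1 + θ) := by
    rw [← ENNReal.rpow_add _ _ hN0 hNt]; ring_nf
  have e3 : d ^ (q - n) * d ^ (n * (1 - θ)) = d ^ (-b * θ) * d ^ (q - n * θ + b * θ) := by
    rw [← ENNReal.rpow_add _ _ hd0 hdt, ← ENNReal.rpow_add _ _ hd0 hdt]; ring_nf
  calc _ = Δ ^ n * N ^ (q - 1) * H ^ θ * v ^ (1 - θ) * (d ^ (q - n) * d ^ (n * (1 - θ))) := by ring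
    _ = _ := by rw [e1, e2, e3]; ring

theorem aux_main {n : ℕ} (hn : 2 ≤ n) {G : Set (EuclideanSpace ℝ (Fin n))}
    (hGo : IsOpen G) (hGc : IsConnected G) (hGb : Bornology.IsBounded G)
    {β : ℝ} (hβ : 0 < β) (hβ1 : β ≤ 1) (hqhbc : QHBC G β)
    {l : ℝ} (hl0 : 0 ≤ l) (hln : l < n) (hdim : upperMinkowskiDim n (frontier G) ≤ l)
    {q p : ℝ} (hq : 1 ≤ q) (hqp : q < p)
    (hp : p > q * ((n:ℝ) - l * β) / (q + β * ((n:ℝ) - l))) :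
    ∃ C : ℝ≥0∞, C ≠ ⊤ ∧ ∀ u : EuclideanSpace ℝ (Fin n) → ℝ, DifferentiableOn ℝ u G → ∃ m₀ : ℝ,
      ∫⁻ y in G, ‖u y - m₀‖ₑ ^ q ≤ C * (∫⁻ y in G, ‖fderiv ℝ u y‖ₑ ^ p) ^ (q / p) := by
  obtain ⟨x₀, hx₀, c, hqh⟩ := hqhbc
  have hne : G.Nonempty := ⟨x₀, hx₀⟩
  obtain ⟨D, hD1, hD⟩ := aux_dbdd hn hGb hne
  obtain ⟨Cg, hCg, hgeom⟩ := aux_geom hn hGo hGc hGb hβ hx₀ hqh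
  obtain ⟨S, hSc, hSG, hdisj, hcov⟩ := aux_whitney hn hGo hGb hne
  have : Countable S := hSc.to_subtype
  obtain ⟨Cs, hCs, hstep⟩ := aux_step hn hGo hGb hq
  have hg' : ∀ i : S, _ := fun i => hgeom i (hSG i.2)
  choose M z hz0 hzM hzG hz8 hzβ hzC hzN using hg'
  obtain ⟨K, hK, hX⟩ := aux_X hn hGo hGb hne hβ hβ1 hSc hSG hdisj hzG hCg hzβ
  have hq0 : 0 < q := by linarith
  have hp0 : 0 < p := by linarith
  set θ := q / p with hθ
  have hθ0 : 0 < θ := by positivity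
  have hθ1 : 0 < 1 - θ := by rw [sub_pos, hθ, div_lt_one hp0]; exact hqp
  set κ := (q - 1 + θ) / (1 - θ) with hκ
  set e := (q - n * θ + (β * n) * θ) / (1 - θ) with he
  have hκ0 : 0 ≤ κ := div_nonneg (by linarith) hθ1.le
  have hκ' : κ * (1 - θ) = q - 1 + θ := div_mul_cancel₀ _ hθ1.ne'
  have he' : e * (1 - θ) = q - n * θ + (β * n) * θ := div_mul_cancel₀ _ hθ1.ne'
  have hnl : (0:ℝ) < n - l := by linarith
  have hcond : 0 < e + β * (n - l) := by
    have h1 : 0 < q + β * (n - l) := by positivity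
    rw [gt_iff_lt, div_lt_iff₀ h1] at hp
    have h2 : 0 < (e + β * (n - l)) * (1 - θ) := by
      rw [add_mul, he']
      have h3 : (q - n * θ + β * n * θ + β * (n - l) * (1 - θ)) * p = 
          p * (q + β * (n - l)) - q * (n - l * β) := by
        rw [hθ]; field_simp; ring
      have h4 : 0 < (q - n * θ + β * n * θ + β * (n - l) * (1 - θ)) * p := by rw [h3]; linarith
      exact pos_of_mul_pos_left h4 hp0.le
    exact pos_of_mul_pos_left h2 hθ1.le
  obtain ⟨s, KY, hs0, hsl, hKY, hYr⟩ := aux_Y_real (c := c) hD1 hβ hCg hκ0 hnl hcond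
  have hsum := aux_sum hn hGo hGb hne hl0 hdim hs0 hsl hSc hSG hdisj
  set δ := fun w => Metric.infDist w (frontier G) with hδ
  have hpos : ∀ w ∈ G, 0 < δ w := fun w hw => aux_dpos hn hGo hGb hw
  set Y : S → ℕ → ℝ≥0∞ := fun i k => ENNReal.ofReal (δ i) ^ (n:ℝ) * ((M i + 1 : ℕ) : ℝ≥0∞) ^ κ *
    ENNReal.ofReal (δ (z i k)) ^ e with hY
  have hYsum : ∑' i : S, ∑ k ∈ Finset.range (M i + 1), Y i k ≠ ⊤ := by
    have hi : ∀ i : S, ∑ k ∈ Finset.range (M i + 1), Y i k ≤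
        ENNReal.ofReal KY * ENNReal.ofReal (δ i ^ ((n:ℝ) - s)) := by
      intro i
      have hdi := hpos _ (hSG i.2)
      have hN0 : (0:ℝ) < ((M i + 1 : ℕ) : ℝ) := by positivity
      have hk : ∀ k ∈ Finset.range (M i + 1), Y i k ≤ ENNReal.ofReal (((M i + 1 : ℕ) : ℝ)⁻¹ *
          (KY * δ i ^ ((n:ℝ) - s))) := by
        intro k hk
        have hk' : k ≤ M i := Nat.lt_succ_iff.1 (Finset.mem_range.1 hk)
        have hdz := hpos _ (hzG i k)
        have h1 := hYr (δ i) (δ (z i k)) ((M i + 1 : ℕ) : ℝ) hdi (hD _ (hSG i.2)) hdz (hD _ (hzG i k))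
          (by simp) (hzC i k hk') (by push_cast; exact hzN i)
        simp only [hY]
        rw [← ENNReal.ofReal_natCast, ENNReal.ofReal_rpow_of_pos hdi, ENNReal.ofReal_rpow_of_pos hN0,
          ENNReal.ofReal_rpow_of_pos hdz, ← ENNReal.ofReal_mul (by positivity),
          ← ENNReal.ofReal_mul (by positivity)]
        refine ENNReal.ofReal_le_ofReal ?_
        rw [Real.rpow_add hN0, Real.rpow_one] at h1
        rw [sub_eq_add_neg, Real.rpow_add hdi, ← div_eq_inv_mul, le_div_iff₀ hN0]
        have := mul_le_mul_of_nonneg_left h1 (show 0 ≤ δ i ^ (n:ℝ) by positivity)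
        nlinarith
      refine (Finset.sum_le_sum hk).trans (le_of_eq ?_)
      rw [Finset.sum_const, Finset.card_range, nsmul_eq_mul, ← ENNReal.ofReal_natCast,
        ← ENNReal.ofReal_mul hN0.le, ← ENNReal.ofReal_mul hKY.le, mul_inv_cancel_left₀ hN0.ne']
    refine ne_of_lt (lt_of_le_of_lt (ENNReal.tsum_le_tsum hi) ?_)
    rw [ENNReal.tsum_mul_left]
    exact ENNReal.mul_lt_top ENNReal.ofReal_lt_top hsum
  set v := volume (Metric.ball (0 : EuclideanSpace ℝ (Fin n)) 1) with hv
  have hvt : v ≠ ⊤ := measure_ball_lt_top.ne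
  set SY := ∑' i : S, ∑ k ∈ Finset.range (M i + 1), Y i k with hSY
  set C1 : ℝ≥0∞ := 2 ^ (q - 1) * (Cs * (1 + 2 * v)) with hC1
  have hC1t : C1 ≠ ⊤ := by
    rw [hC1]
    refine ENNReal.mul_ne_top (ENNReal.rpow_ne_top_of_nonneg (by linarith) (by simp)) (by finiteness)
  refine ⟨C1 * (v ^ (1 - θ) * (K ^ θ * SY ^ (1 - θ))), ?_, fun u hu => ?_⟩
  · have a1 := ENNReal.rpow_ne_top_of_nonneg hθ1.le hvt
    have a2 := ENNReal.rpow_ne_top_of_nonneg hθ0.le hK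
    have a3 := ENNReal.rpow_ne_top_of_nonneg hθ1.le hYsum
    exact ENNReal.mul_ne_top hC1t (ENNReal.mul_ne_top a1 (ENNReal.mul_ne_top a2 a3))
  obtain ⟨m, hm1, hm2⟩ := hstep u hu
  refine ⟨m x₀, ?_⟩
  set g := fun y => ‖fderiv ℝ u y‖ₑ with hg
  have hgm : Measurable g := (measurable_fderiv ℝ u).enorm
  set F := fun w => ∫⁻ y in Metric.ball w (δ w / 2), g y ^ q with hF
  set X : S → ℕ → ℝ≥0∞ := fun i k => ENNReal.ofReal (δ i) ^ (n:ℝ) *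
    ((M i + 1 : ℕ) : ℝ≥0∞) ^ (-1:ℝ) * ENNReal.ofReal (δ (z i k)) ^ (-(β * n)) *
    ∫⁻ y in Metric.ball (z i k) (δ (z i k) / 2), g y ^ p with hXd
  have hXs : ∑' i : S, ∑ k ∈ Finset.range (M i + 1), X i k ≤ K * ∫⁻ y in G, g y ^ p :=
    hX (fun y => g y ^ p) (hgm.pow_const p)
  have hcell : ∀ i : S, ∫⁻ y in Metric.closedBall (i : EuclideanSpace ℝ (Fin n)) (δ i / 25), ‖u y - m x₀‖ₑ ^ q ≤
      C1 * ∑ k ∈ Finset.range (M i + 1), v ^ (1 - θ) * (X i k ^ θ * Y i k ^ (1 - θ)) := by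
    intro i
    have h1 := aux_cell hn hGo hGb hq hu F hm1 hm2 (hzG i) (hz8 i)
    rw [hzM, hz0] at h1
    refine h1.trans ?_
    rw [Finset.mul_sum]
    refine mul_le_mul_right (Finset.sum_le_sum fun k hk => ?_) _
    have hdi := hpos _ (hSG i.2)
    have hdz := hpos _ (hzG i k)
    rw [← aux_term (by simpa using hdi) ENNReal.ofReal_ne_top (by simp) (by simp)
      (by simpa using hdz) ENNReal.ofReal_ne_top hθ0.le hθ1.le hκ' he']
    gcongr
    exact aux_ball_hold hn g hgm hq0 hqp.le (z i k) hdz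
  have hflat : ∀ f : S → ℕ → ℝ≥0∞, ∑' i : S, ∑ k ∈ Finset.range (M i + 1), f i k =
      ∑' a : (Σ i : S, Fin (M i + 1)), f a.1 a.2 := by
    intro f
    rw [ENNReal.tsum_sigma']
    refine tsum_congr fun i => ?_
    rw [tsum_fintype, Finset.sum_range]
  calc ∫⁻ y in G, ‖u y - m x₀‖ₑ ^ q
      ≤ ∫⁻ y in ⋃ i : S, Metric.closedBall (i : EuclideanSpace ℝ (Fin n)) (δ i / 25), ‖u y - m x₀‖ₑ ^ q := by
        refine lintegral_mono_set ?_
        rw [Set.biUnion_eq_iUnion] at hcov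
        exact hcov
    _ ≤ ∑' i : S, ∫⁻ y in Metric.closedBall (i : EuclideanSpace ℝ (Fin n)) (δ i / 25), ‖u y - m x₀‖ₑ ^ q :=
        lintegral_iUnion_le _ _
    _ ≤ ∑' i : S, C1 * ∑ k ∈ Finset.range (M i + 1), v ^ (1 - θ) * (X i k ^ θ * Y i k ^ (1 - θ)) :=
        ENNReal.tsum_le_tsum hcell
    _ = C1 * (v ^ (1 - θ) * ∑' i : S, ∑ k ∈ Finset.range (M i + 1), (X i k ^ θ * Y i k ^ (1 - θ))) := by
        simp_rw [← Finset.mul_sum]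
        rw [ENNReal.tsum_mul_left, ENNReal.tsum_mul_left]
    _ ≤ C1 * (v ^ (1 - θ) * ((∑' i : S, ∑ k ∈ Finset.range (M i + 1), X i k) ^ θ * SY ^ (1 - θ))) := by
        rw [hSY, hflat, hflat, hflat]
        gcongr
        exact aux_hold_tsum (fun a : (Σ i : S, Fin (M i + 1)) => X a.1 a.2) (fun a => Y a.1 a.2)
          hθ0.le (by linarith)
    _ ≤ C1 * (v ^ (1 - θ) * ((K * ∫⁻ y in G, g y ^ p) ^ θ * SY ^ (1 - θ))) := by
        gcongr
    _ = _ := by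
        rw [ENNReal.mul_rpow_of_nonneg _ _ hθ0.le]
        ring

end PoincareAux

section PoincareAux

theorem aux_mean {n : ℕ} {G : Set (EuclideanSpace ℝ (Fin n))} (hG0 : volume G ≠ 0)
    (hGt : volume G ≠ ⊤) {q : ℝ} (hq : 1 ≤ q) {u : EuclideanSpace ℝ (Fin n) → ℝ}
    (hu : IntegrableOn u G volume) (m₀ : ℝ) :
    ∫⁻ y in G, ‖u y - (∫ y in G, u y) / (volume G).toReal‖ₑ ^ q ≤
      2 ^ q * ∫⁻ y in G, ‖u y - m₀‖ₑ ^ q := by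
  set ub := (∫ y in G, u y) / (volume G).toReal with hub
  set μ := (volume G)⁻¹ • volume.restrict G with hμ
  have hpr : IsProbabilityMeasure μ := ⟨by
    rw [hμ, Measure.smul_apply, Measure.restrict_apply_univ, smul_eq_mul, ENNReal.inv_mul_cancel hG0 hGt]⟩
  have hiu : Integrable u μ := hu.smul_measure (ENNReal.inv_ne_top.2 hG0)
  have e1 : ub - m₀ = ∫ y, (u y - m₀) ∂μ := by
    rw [integral_sub hiu (integrable_const _), integral_const, hμ, integral_smul_measure]
    rw [← hμ, probReal_univ, hub, ENNReal.toReal_inv, smul_eq_mul, one_smul, div_eq_inv_mul]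
  have hae : AEMeasurable (fun y => ‖u y - m₀‖ₑ) (volume.restrict G) :=
    (hu.aestronglyMeasurable.aemeasurable.sub_const _).enorm
  have e2 : ‖ub - m₀‖ₑ ^ q ≤ (volume G)⁻¹ * ∫⁻ y in G, ‖u y - m₀‖ₑ ^ q := by
    have h1 : ‖ub - m₀‖ₑ ≤ ∫⁻ y, ‖u y - m₀‖ₑ ∂μ := by
      rw [e1]; exact enorm_integral_le_lintegral_enorm _
    calc ‖ub - m₀‖ₑ ^ q ≤ (∫⁻ y, ‖u y - m₀‖ₑ ∂μ) ^ q := by gcongr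
      _ ≤ ∫⁻ y, ‖u y - m₀‖ₑ ^ q ∂μ := aux_jensen μ hq (hae.mono_ac (Measure.smul_absolutelyContinuous))
      _ = _ := by rw [hμ, lintegral_smul_measure, smul_eq_mul]
  calc ∫⁻ y in G, ‖u y - ub‖ₑ ^ q
      ≤ ∫⁻ y in G, 2 ^ (q - 1) * (‖u y - m₀‖ₑ ^ q + ‖ub - m₀‖ₑ ^ q) := by
        gcongr with y
        refine le_trans ?_ (ENNReal.rpow_add_le_mul_rpow_add_rpow _ _ hq)
        gcongr
        have : u y - ub = (u y - m₀) - (ub - m₀) := by ring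
        rw [this]
        exact enorm_sub_le
    _ = 2 ^ (q - 1) * ((∫⁻ y in G, ‖u y - m₀‖ₑ ^ q) + ‖ub - m₀‖ₑ ^ q * volume G) := by
        rw [lintegral_const_mul' _ _ (ENNReal.rpow_ne_top_of_nonneg (by linarith) (by simp)),
          lintegral_add_left' (hae.pow_const _), setLIntegral_const]
    _ ≤ 2 ^ (q - 1) * ((∫⁻ y in G, ‖u y - m₀‖ₑ ^ q) +
          ((volume G)⁻¹ * ∫⁻ y in G, ‖u y - m₀‖ₑ ^ q) * volume G) := by gcongr
    _ = 2 ^ (q - 1) * ((∫⁻ y in G, ‖u y - m₀‖ₑ ^ q) +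
          ((volume G)⁻¹ * volume G) * ∫⁻ y in G, ‖u y - m₀‖ₑ ^ q) := by ring
    _ = 2 ^ (q - 1) * 2 * ∫⁻ y in G, ‖u y - m₀‖ₑ ^ q := by
        rw [ENNReal.inv_mul_cancel hG0 hGt]; ring
    _ = _ := by
        congr 1
        have : (2:ℝ≥0∞) ^ q = 2 ^ (q - 1 + 1) := by ring_nf
        rw [this, ENNReal.rpow_add _ _ (by simp) (by simp), ENNReal.rpow_one]

end PoincareAux

/-- Main theorem. A bounded domain `G ⊂ ℝⁿ` satisfying a
`β`-quasihyperbolic boundary condition, with `dim_M(∂G) ≤ λ ∈ [n-1, n)`, supports the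
`(q,p)`-Poincaré inequality whenever `1 ≤ q < p < ∞` and
`p > q(n - λβ)/(q + β(n - λ))`. -/
theorem stmt_12 (n : ℕ) (hn : 2 ≤ n) (G : Set (EuclideanSpace ℝ (Fin n)))
    (hGo : IsOpen G) (hGc : IsConnected G) (hGb : Bornology.IsBounded G)
    (β : ℝ) (hβ : β ∈ Set.Ioc (0:ℝ) 1) (hqhbc : QHBC G β)
    (l : ℝ) (hl : l ∈ Set.Ico ((n:ℝ) - 1) (n:ℝ))
    (hdim : upperMinkowskiDim n (frontier G) ≤ l)
    (q p : ℝ) (hq : 1 ≤ q) (hqp : q < p)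
    (hp : p > q * ((n:ℝ) - l * β) / (q + β * ((n:ℝ) - l))) :
    SupportsPoincare G q p := by
  have hl0 : 0 ≤ l := by
    have : (2:ℝ) ≤ n := by exact_mod_cast hn
    linarith [hl.1]
  obtain ⟨C, hC, hmain⟩ := aux_main hn hGo hGc hGb hβ.1 hβ.2 hqhbc hl0 hl.2 hdim hq hqp hp
  have hG0 : volume G ≠ 0 := (hGo.measure_pos volume hGc.nonempty).ne'
  have hGt : volume G ≠ ⊤ := hGb.measure_lt_top.ne
  have hq0 : 0 < q := by linarith
  have hp0 : 0 < p := by linarith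
  refine ⟨((2 ^ q * C).toReal) ^ (1/q), fun u hu hui hdi => ?_⟩
  obtain ⟨m₀, hm⟩ := hmain u hu
  have hmean := aux_mean hG0 hGt hq hui m₀
  set ub := (∫ y in G, u y) / (volume G).toReal with hub
  have hH : ∫⁻ y in G, ‖fderiv ℝ u y‖ₑ ^ p =
      ENNReal.ofReal (∫ x in G, ‖fderivWithin ℝ u G x‖ ^ p) := by
    rw [ofReal_integral_eq_lintegral_ofReal hdi
      (Filter.Eventually.of_forall fun x => by positivity)]
    refine setLIntegral_congr_fun hGo.measurableSet fun x hx => ?_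
    rw [fderivWithin_of_isOpen hGo hx, ← ENNReal.ofReal_rpow_of_nonneg (norm_nonneg _) hp0.le,
      ofReal_norm]
  have hI : ∫ x in G, |u x - ub| ^ q = (∫⁻ x in G, ‖u x - ub‖ₑ ^ q).toReal := by
    rw [integral_eq_lintegral_of_nonneg_ae (Filter.Eventually.of_forall fun x => by positivity)]
    · congr 1
      refine lintegral_congr fun x => ?_
      rw [← Real.norm_eq_abs, ← ENNReal.ofReal_rpow_of_nonneg (norm_nonneg _) hq0.le, ofReal_norm]
    · exact ((hui.aestronglyMeasurable.aemeasurable.sub_const _).abs.pow_const _).aestronglyMeasurable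
  set Hr := ∫ x in G, ‖fderivWithin ℝ u G x‖ ^ p with hHr
  have hHr0 : 0 ≤ Hr := integral_nonneg fun x => by positivity
  have hbound : ∫⁻ x in G, ‖u x - ub‖ₑ ^ q ≤ 2 ^ q * C * ENNReal.ofReal (Hr ^ (q/p)) := by
    rw [← ENNReal.ofReal_rpow_of_nonneg hHr0 (by positivity), ← hH, mul_assoc]
    exact hmean.trans (by gcongr)
  have h2C : 2 ^ q * C ≠ ⊤ :=
    ENNReal.mul_ne_top (ENNReal.rpow_ne_top_of_nonneg hq0.le (by simp)) hC
  have hreal : (∫⁻ x in G, ‖u x - ub‖ₑ ^ q).toReal ≤ (2 ^ q * C).toReal * Hr ^ (q/p) := by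
    have := ENNReal.toReal_mono (ENNReal.mul_ne_top h2C ENNReal.ofReal_ne_top) hbound
    rwa [ENNReal.toReal_mul, ENNReal.toReal_ofReal (by positivity)] at this
  rw [hI]
  calc _ ≤ ((2 ^ q * C).toReal * Hr ^ (q/p)) ^ (1/q) :=
        Real.rpow_le_rpow ENNReal.toReal_nonneg hreal (by positivity)
    _ = _ := by
        rw [Real.mul_rpow ENNReal.toReal_nonneg (by positivity), ← Real.rpow_mul hHr0]
        congr 2
        field_simp
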